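/- arXiv:math/0505186 — 4 statements merged into one kernel-verified Lean document; each statement's English description precedes it below -/
import Mathlib

section
/- Let k be a field, let X ⊂ P^n_k be a hypersurface of degree d > 1, and let m be an integer with 2m ≥ n. Then every m-plane Λ ⊆ X intersects the singular locus of X; equivalently, if a homogeneous polynomial F of degree d > 1 in x_0,…,x_n vanishes identically on an m-plane Λ with 2m ≥ n, then Λ contains a point at which all partial derivatives ∂F/∂x_i vanish. In particular, if X is smooth then the Fano variety F_m(X) of m-planes in X is empty. -/
/-!
Along `W` the derivatives of `F` in the directions of `W` vanish, so a point of `W` is singular as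
soon as the derivatives in `codim W` directions complementary to `W` vanish there. Together with the
`codim W` linear equations of `W` these are `2 * codim W` equations, fewer than the number of
coordinates, and by Krull's height theorem so few equations never have exactly one solution.
The origin is a solution because `1 < d`, so there is another one.
-/

open MvPolynomial Module

section Translation

variable {σ R : Type*} [CommRing R]

/-- The automorphism `X i ↦ X i + C (a i)` of the polynomial ring, which carries the ideal of the
point `x` to that of `x - a`; it serves to compare the heights of the ideals of two points. -/
noncomputable def translateAlgEquiv (a : σ → R) : MvPolynomial σ R ≃ₐ[R] MvPolynomial σ R :=
  AlgEquiv.ofAlgHom (aeval fun i => X i + C (a i)) (aeval fun i => X i - C (a i))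
    (by ext; simp [← algebraMap_eq]) (by ext; simp [← algebraMap_eq])

theorem aeval_translateAlgEquiv (a x : σ → R) (p : MvPolynomial σ R) :
    aeval x (translateAlgEquiv a p) = aeval (x + a) p := by
  rw [translateAlgEquiv, AlgEquiv.ofAlgHom_apply, comp_aeval_apply]
  congr 2
  ext i
  simp

end Translation

section CommonZeros

variable {σ ι K : Type*} [Field K]

theorem height_vanishingIdeal_singleton_eq (x y : σ → K) :
    (vanishingIdeal K {x}).height = (vanishingIdeal K {y}).height := by
  have hcomap : (vanishingIdeal K {y}).comap (translateAlgEquiv (x - y)).toRingEquiv =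
      vanishingIdeal K {x} := by
    ext p
    simp [Ideal.mem_comap, aeval_translateAlgEquiv]
  rw [← hcomap, RingEquiv.height_comap]

theorem exists_forall_aeval_eq_zero_iff_mem [Finite σ] (W : Submodule K (σ → K)) :
    ∃ L : Fin (finrank K ((σ → K) ⧸ W)) → MvPolynomial σ K,
      ∀ v, (∀ j, aeval v (L j) = 0) ↔ v ∈ W := by
  classical
  have := Fintype.ofFinite σ
  let b := finBasis K ((σ → K) ⧸ W)
  refine ⟨W.mkQ.toMvPolynomial (Pi.basisFun K σ) b, fun v => ?_⟩
  have heval (j) : aeval v (W.mkQ.toMvPolynomial (Pi.basisFun K σ) b j) = b.repr (W.mkQ v) j :=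
    (W.mkQ.toMvPolynomial_eval_eq_apply (Pi.basisFun K σ) b j ((Pi.basisFun K σ).repr v)).trans
      (by rw [LinearEquiv.symm_apply_apply])
  simp only [heval, ← Submodule.ker_mkQ W, LinearMap.mem_ker, ← b.repr.map_eq_zero_iff,
    Finsupp.ext_iff, Finsupp.zero_apply]

variable [IsAlgClosed K]

theorem height_vanishingIdeal_singleton [Finite σ] (x : σ → K) :
    (vanishingIdeal K {x}).height = Nat.card σ := by
  have hdim : ringKrullDim (MvPolynomial σ K) = Nat.card σ := by simp
  have : FiniteRingKrullDim (MvPolynomial σ K) :=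
    finiteRingKrullDim_iff_ne_bot_and_top.mpr
      (hdim ▸ ⟨WithBot.natCast_ne_bot _, (WithBot.coe_lt_coe.mpr (ENat.natCast_lt_top _)).ne⟩)
  obtain ⟨I, hI, hheight⟩ := Ideal.exists_isMaximal_height (R := MvPolynomial σ K)
  obtain ⟨y, rfl⟩ := eq_vanishingIdeal_singleton_of_isMaximal K hI
  rw [height_vanishingIdeal_singleton_eq x y]
  exact_mod_cast hheight.trans hdim

theorem exists_ne_forall_aeval_eq_zero [Finite σ] [Finite ι] (hcard : Nat.card ι < Nat.card σ)
    (G : ι → MvPolynomial σ K) {x : σ → K} (hx : ∀ j, aeval x (G j) = 0) :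
    ∃ y, y ≠ x ∧ ∀ j, aeval y (G j) = 0 := by
  by_contra! hisolated
  have hzeros : zeroLocus K (Ideal.span (Set.range G)) = {x} := by
    ext y
    simp only [zeroLocus_span, Set.forall_mem_range, Set.mem_ofPred_eq, Set.mem_singleton_iff]
    refine ⟨fun hy => ?_, fun hy => hy ▸ hx⟩
    by_contra hne
    obtain ⟨j, hj⟩ := hisolated y hne
    exact hj (hy j)
  have hminimal : vanishingIdeal K {x} ∈ (Ideal.span (Set.range G)).minimalPrimes := by
    rw [← Ideal.radical_minimalPrimes, ← vanishingIdeal_zeroLocus_eq_radical (K := K), hzeros,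
      Ideal.minimalPrimes_eq_subsingleton_self]
    rfl
  have hheight : (Nat.card σ : ℕ∞) ≤ (Set.range G).ncard :=
    height_vanishingIdeal_singleton x ▸
      Ideal.height_le_card_of_mem_minimalPrimes_span (Set.finite_range G) hminimal
  exact (hcard.trans_le (Nat.cast_le.mp hheight)).not_ge (Finite.card_range_le G)

theorem exists_ne_mem_forall_aeval_eq_zero [Finite σ] [Finite ι] (W : Submodule K (σ → K))
    (hcard : Nat.card ι < finrank K W) (G : ι → MvPolynomial σ K) {x : σ → K} (hxW : x ∈ W)
    (hx : ∀ j, aeval x (G j) = 0) :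
    ∃ y ∈ W, y ≠ x ∧ ∀ j, aeval y (G j) = 0 := by
  have := Fintype.ofFinite σ
  obtain ⟨L, hL⟩ := exists_forall_aeval_eq_zero_iff_mem W
  have hcodim : Nat.card (Fin (finrank K ((σ → K) ⧸ W)) ⊕ ι) < Nat.card σ := by
    have hsum := W.finrank_quotient_add_finrank
    rw [finrank_fintype_fun_eq_card, ← Nat.card_eq_fintype_card] at hsum
    rw [Nat.card_sum, Nat.card_fin]
    omega
  obtain ⟨y, hne, hy⟩ := exists_ne_forall_aeval_eq_zero hcodim (Sum.elim L G) (x := x)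
    (Sum.forall.mpr ⟨(hL x).mpr hxW, hx⟩)
  exact ⟨y, (hL y).mp fun j => hy (.inl j), hne, fun j => hy (.inr j)⟩

end CommonZeros

section DirectionalDerivatives

variable {σ k : Type*} [Fintype σ] [CommSemiring k]

theorem derivation_aeval {B M : Type*} [CommSemiring B] [Algebra k B] [AddCommMonoid M]
    [Module B M] [Module k M] (D : Derivation k B M) (f : σ → B) (F : MvPolynomial σ k) :
    D (aeval f F) = ∑ i, aeval f (pderiv i F) • D (f i) := by
  classical
  induction F using MvPolynomial.induction_on with
  | C a => simp [← algebraMap_eq]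
  | add p q hp hq => simp only [map_add, hp, hq, add_smul, Finset.sum_add_distrib]
  | mul_X p j hp =>
    simp only [map_mul, aeval_X, D.leibniz, hp, Finset.smul_sum, Derivation.leibniz, pderiv_X,
      smul_eq_mul, map_add, add_smul, Finset.sum_add_distrib, mul_smul]
    simp [Pi.single_apply, apply_ite]

theorem sum_aeval_pderiv_mul_eq_zero_of_line {K : Type*} [CommRing K] [IsDomain K] [Infinite K]
    [Algebra k K] {F : MvPolynomial σ k} {v w : σ → K} (hF : ∀ t : K, aeval (v + t • w) F = 0) :
    ∑ i, aeval v (pderiv i F) * w i = 0 := by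
  let line (i : σ) : Polynomial K := .C (v i) + .C (w i) * .X
  have heval (t : K) (p : MvPolynomial σ k) :
      (aeval line p).eval t = aeval (v + t • w) p := by
    rw [← Polynomial.coe_aeval_eq_eval, ← AlgHom.coe_restrictScalars' k, comp_aeval_apply]
    congr 2
    ext i
    simp [line, mul_comm t]
  have hline : aeval line F = 0 := Polynomial.funext fun t => by simp [heval, hF]
  calc ∑ i, aeval v (pderiv i F) * w i
      = (∑ i, aeval line (pderiv i F) * (line i).derivative).eval 0 := by
        simp [Polynomial.eval_finsetSum, heval, line]
    _ = (aeval line F).derivative.eval 0 :=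
        congrArg _ (derivation_aeval (Polynomial.derivative'.restrictScalars k) line F).symm
    _ = 0 := by simp [hline]

theorem aeval_pderiv_eq_zero_of_codisjoint {K : Type*} [CommRing K] [IsDomain K] [Infinite K]
    [Algebra k K] {F : MvPolynomial σ k} {W U : Submodule K (σ → K)}
    (hWU : Codisjoint W U) (hWX : ∀ v ∈ W, aeval v F = 0) {v : σ → K} (hv : v ∈ W)
    (hU : ∀ u ∈ U, ∑ i, aeval v (pderiv i F) * u i = 0) (i : σ) : aeval v (pderiv i F) = 0 := by
  classical
  obtain ⟨w, u, hw, hu, hwu⟩ := Submodule.codisjoint_iff_exists_add_eq.mp hWU (Pi.single i 1)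
  calc aeval v (pderiv i F)
      = ∑ j, aeval v (pderiv j F) * (w + u) j := by rw [hwu]; simp [Pi.single_apply]
    _ = ∑ j, aeval v (pderiv j F) * w j + ∑ j, aeval v (pderiv j F) * u j := by
        simp only [Pi.add_apply, mul_add, Finset.sum_add_distrib]
    _ = 0 := by
        rw [sum_aeval_pderiv_mul_eq_zero_of_line fun t => hWX _ (W.add_mem hv (W.smul_mem t hw)),
          hU u hu, add_zero]

end DirectionalDerivatives

theorem aeval_zero_eq_zero_of_isHomogeneous {k K σ : Type*} [CommSemiring k] [CommSemiring K]
    [Algebra k K] {p : MvPolynomial σ k} {e : ℕ} (hp : p.IsHomogeneous e) (he : e ≠ 0) :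
    aeval (0 : σ → K) p = 0 := by
  rw [aeval_zero, constantCoeff_eq, hp.coeff_eq_zero (by simpa using he.symm), map_zero]

theorem statement8_general {k K σ : Type*} [CommSemiring k] [Field K] [IsAlgClosed K] [Algebra k K]
    [Fintype σ] (F : MvPolynomial σ k) (W : Submodule K (σ → K))
    (hW : Fintype.card σ < 2 * finrank K W) (hWX : ∀ v ∈ W, aeval v F = 0)
    {x : σ → K} (hxW : x ∈ W) (hx : ∀ i, aeval x (pderiv i F) = 0) :
    ∃ v ∈ W, v ≠ x ∧ ∀ i, aeval v (pderiv i F) = 0 := by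
  obtain ⟨U, hU⟩ := W.exists_isCompl
  let b := finBasis K U
  let G j : MvPolynomial σ K := ∑ i, map (algebraMap k K) (pderiv i F) * C ((b j : σ → K) i)
  have hG (v j) : aeval v (G j) = ∑ i, aeval v (pderiv i F) * (b j : σ → K) i := by
    simp only [G, map_sum, map_mul, aeval_map_algebraMap, aeval_C, Algebra.algebraMap_self_apply]
  have hcard : Nat.card (Fin (finrank K U)) < finrank K W := by
    have hsum := Submodule.finrank_add_eq_of_isCompl hU
    rw [finrank_fintype_fun_eq_card] at hsum
    rw [Nat.card_fin]
    omega
  obtain ⟨v, hvW, hne, hv⟩ :=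
    exists_ne_mem_forall_aeval_eq_zero W hcard G hxW fun j => by simp [hG, hx]
  let φ : (σ → K) →ₗ[K] K := ∑ i, aeval v (pderiv i F) • LinearMap.proj i
  have hφ (u) : φ u = ∑ i, aeval v (pderiv i F) * u i := by simp [φ]
  have hφU : φ ∘ₗ U.subtype = 0 := b.ext fun j => (hφ _).trans ((hG v j).symm.trans (hv j))
  exact ⟨v, hvW, hne, aeval_pderiv_eq_zero_of_codisjoint hU.codisjoint hWX hvW
    fun u hu => (hφ u).symm.trans (LinearMap.congr_fun hφU ⟨u, hu⟩)⟩

/-- **Proposition (appendix, Prop. 1).** Let k be a field, F a form of degree d > 1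
in n+1 variables over k, and m an integer with 2m ≥ n.  If F vanishes identically on
an m-plane Λ of Pⁿ (given as an (m+1)-dimensional linear subspace W of the geometric
affine cone, over the algebraic closure), then Λ contains a point at which all the
partial derivatives ∂F/∂xᵢ vanish; that is, Λ intersects the singular locus of the
hypersurface X = {F = 0}.  In particular, if X is smooth then the Fano variety
F_m(X) is empty. -/
theorem statement8 (k : Type) [Field k] (n m d : ℕ) (h2m : n ≤ 2 * m) (hd : 1 < d)
    (F : MvPolynomial (Fin (n + 1)) k) (hF : F.IsHomogeneous d)
    (W : Submodule (AlgebraicClosure k) (Fin (n + 1) → AlgebraicClosure k))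
    (hW : Module.finrank (AlgebraicClosure k) W = m + 1)
    (hWX : ∀ v ∈ W, MvPolynomial.aeval v F = 0) :
    ∃ v ∈ W, v ≠ 0 ∧ ∀ i, MvPolynomial.aeval v (MvPolynomial.pderiv i F) = 0 :=
  statement8_general F W (by rw [hW, Fintype.card_fin]; omega) hWX W.zero_mem fun _ =>
    aeval_zero_eq_zero_of_isHomogeneous hF.pderiv (by omega)
end

section
/- Let n = 2m+1 and let X ⊂ P^n be a hypersurface of degree d ≥ 3 over a field. Then there are only finitely many m-planes contained in the smooth locus X_sm of X. In particular, a smooth hypersurface of degree d ≥ 3 in P^{2m+1} contains at most finitely many m-planes, i.e. its Fano variety F_m(X) is finite. -/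
/-!
After a permutation of the coordinates, an `n`-dimensional subspace `W` of a `2n`-dimensional
coordinate space is the graph of an `n × n` matrix `A`, and the matrices whose graph lies in
`F = 0` form an affine scheme. A tangent vector `δ` to this scheme at `A` is a linear syzygy
`∑ j, (x ᵥ* δ) j * f j = 0` among the `n` normal partial derivatives `f j` of `F`, restricted to
`W`. These are `n` forms of degree `d - 1 ≥ 2` in `n` variables. If `W` lies in the smooth locus,
they have no common zero besides the origin: by the chain rule the tangential partial derivatives
vanish wherever the normal ones do. Hence they form a regular sequence in the local ring at the
origin, so the entries of any syzygy lie in the ideal generated by the `f j` and have order at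
least `d - 1 ≥ 2`; a linear syzygy is therefore zero. So the tangent space at `A` vanishes and `A`
is an irreducible component of the scheme, of which there are finitely many.
-/

open RingTheory.Sequence

namespace LinearSubspacesOfHypersurfaces

section RegularSequences

variable {R : Type*} [CommRing R]

theorem isWeaklyRegular_append_singleton_of_mem_radical {M : Type*} [AddCommGroup M] [Module R M]
    {rs : List R} {a b : R} (h : IsWeaklyRegular M (rs ++ [a]))
    (hab : a ∈ (Ideal.ofList (rs ++ [b])).radical) : IsWeaklyRegular M (rs ++ [b]) := by
  rw [isWeaklyRegular_append_iff, isWeaklyRegular_singleton_iff] at h ⊢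
  refine ⟨h.1, ?_⟩
  obtain ⟨n, hn⟩ := hab
  rw [Ideal.ofList_append, Ideal.ofList_singleton] at hn
  obtain ⟨i, hi, _, hb, hsum⟩ := Submodule.mem_sup.mp hn
  obtain ⟨c, rfl⟩ := Ideal.mem_span_singleton'.mp hb
  refine IsSMulRegular.of_mul (a := c) fun x y hxy => h.2.pow n ?_
  have smul_eq (z : M ⧸ Ideal.ofList rs • (⊤ : Submodule R M)) :
      a ^ n • z = (c * b) • z := by
    induction z using Submodule.Quotient.induction_on with | _ z =>
    rw [← hsum, add_smul, ← Submodule.Quotient.mk_smul _ i,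
      (Submodule.Quotient.mk_eq_zero _).mpr (Submodule.smul_mem_smul hi Submodule.mem_top),
      zero_add]
  simpa only [smul_eq] using hxy

variable [IsLocalRing R]

open IsLocalRing

theorem exists_mem_maximalIdeal_forall_notMem {s : Set (Ideal R)} (hs : s.Finite)
    (hprime : ∀ p ∈ s, p.IsPrime) :
    ∃ h ∈ maximalIdeal R, ∀ p ∈ s, p ≠ maximalIdeal R → h ∉ p := by
  by_contra! hcover
  have hsub : (maximalIdeal R : Set R) ⊆ ⋃ p ∈ s \ {maximalIdeal R}, (p : Set R) := fun h hh => by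
    obtain ⟨p, hp, hne, hhp⟩ := hcover h hh
    exact Set.mem_biUnion ⟨hp, hne⟩ hhp
  obtain ⟨p, ⟨hp, hne⟩, hle⟩ := (Ideal.subset_union_prime_finite hs.sdiff (f := id) ⊥ ⊥
    fun p hp _ _ => hprime p hp.1).mp hsub
  exact hne (((maximalIdeal.isMaximal R).eq_of_le (hprime p hp).ne_top hle).symm)

variable [IsNoetherianRing R]

theorem radical_sup_span_singleton_eq_maximalIdeal {I : Ideal R} {b h : R}
    (hb : (I ⊔ Ideal.span {b}).radical = maximalIdeal R) (hh : h ∈ maximalIdeal R)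
    (havoid : ∀ p ∈ I.minimalPrimes, p ≠ maximalIdeal R → h ∉ p) :
    (I ⊔ Ideal.span {h}).radical = maximalIdeal R := by
  have hIb : I ⊔ Ideal.span {b} ≤ maximalIdeal R := hb ▸ Ideal.le_radical
  have hIh : I ⊔ Ideal.span {h} ≤ maximalIdeal R :=
    sup_le (le_sup_left.trans hIb) ((Ideal.span_singleton_le_iff_mem _).mpr hh)
  refine le_antisymm ((maximalIdeal.isMaximal R).isPrime.radical_le_iff.mpr hIh) ?_
  rw [Ideal.radical_eq_sInf]
  rintro x hx
  refine Submodule.mem_sInf.mpr fun q ⟨hIq, hq⟩ => ?_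
  suffices maximalIdeal R ≤ q from this hx
  by_contra hlt
  replace hlt : q < maximalIdeal R := lt_of_le_not_ge (le_maximalIdeal hq.ne_top) hlt
  have hspan : Ideal.span (insert b (I : Set R)) = I ⊔ Ideal.span {b} := by
    rw [Ideal.span_insert, Ideal.span_eq, sup_comm]
  have hmin : maximalIdeal R ∈ (Ideal.span (insert b (I : Set R))).minimalPrimes := by
    rw [hspan, ← Ideal.radical_minimalPrimes, hb, Ideal.minimalPrimes_eq_subsingleton_self]
    rfl
  have hqmin := Ideal.mem_minimalPrimes_span_of_mem_minimalPrimes_span_insert hlt b I hmin I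
    (fun x hx => hIq (Ideal.mem_sup_left hx))
    (fun x hx => Ideal.le_radical (Ideal.subset_span (Set.mem_insert_of_mem _ hx)))
  rw [Ideal.span_eq] at hqmin
  exact havoid q hqmin hlt.ne (hIq (Ideal.mem_sup_right (Ideal.mem_span_singleton_self h)))

theorem exists_radical_append_singleton_eq_maximalIdeal {as fs : List R} {a f : R}
    (has : (Ideal.ofList (as ++ [a])).radical = maximalIdeal R)
    (hfs : (Ideal.ofList (fs ++ [f])).radical = maximalIdeal R) :
    ∃ h, (Ideal.ofList (as ++ [h])).radical = maximalIdeal R ∧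
      (Ideal.ofList (fs ++ [h])).radical = maximalIdeal R := by
  have finite_minimalPrimes := Ideal.finite_minimalPrimes_of_isNoetherianRing R
  obtain ⟨h, hh, havoid⟩ := exists_mem_maximalIdeal_forall_notMem
    ((finite_minimalPrimes (Ideal.ofList as)).union (finite_minimalPrimes (Ideal.ofList fs)))
    (by rintro p (hp | hp) <;> exact hp.1.1)
  rw [Ideal.ofList_append, Ideal.ofList_singleton] at has hfs
  refine ⟨h, ?_, ?_⟩ <;> rw [Ideal.ofList_append, Ideal.ofList_singleton]
  · exact radical_sup_span_singleton_eq_maximalIdeal has hh fun p hp => havoid p (.inl hp)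
  · exact radical_sup_span_singleton_eq_maximalIdeal hfs hh fun p hp => havoid p (.inr hp)

theorem isWeaklyRegular_append_of_radical_eq_maximalIdeal {cs as fs : List R}
    (hlen : as.length = fs.length)
    (has : (Ideal.ofList (cs ++ as)).radical = maximalIdeal R)
    (hfs : (Ideal.ofList (cs ++ fs)).radical = maximalIdeal R)
    (hreg : IsWeaklyRegular R (cs ++ as)) : IsWeaklyRegular R (cs ++ fs) := by
  induction as using List.reverseRecOn generalizing cs fs with
  | nil => rwa [List.length_eq_zero_iff.mp hlen.symm]
  | append_singleton as a ih =>
    obtain rfl | ⟨fs, f, rfl⟩ := List.eq_nil_or_concat' fs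
    · simp at hlen
    simp only [List.length_append, List.length_singleton, Nat.add_right_cancel_iff] at hlen
    simp only [← List.append_assoc] at has hfs hreg ⊢
    -- Both `a` and `f` are exchanged for `h`, which is then moved to the common prefix.
    obtain ⟨h, hash, hfsh⟩ := exists_radical_append_singleton_eq_maximalIdeal has hfs
    have mem_maximalIdeal {l : List R} (hl : (Ideal.ofList l).radical = maximalIdeal R) :
        ∀ r ∈ l, r ∈ maximalIdeal R := fun r hr => hl ▸ Ideal.le_radical (Ideal.subset_span hr)
    have perm (l : List R) : (cs ++ l ++ [h]).Perm (cs ++ [h] ++ l) := by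
      simpa only [List.append_assoc] using List.perm_append_comm.append_left cs
    have ofList_perm (l : List R) :
        Ideal.ofList (cs ++ l ++ [h]) = Ideal.ofList (cs ++ [h] ++ l) := by
      simp only [Ideal.ofList_append, sup_right_comm]
    have hreg_h : IsWeaklyRegular R (cs ++ as ++ [h]) :=
      isWeaklyRegular_append_singleton_of_mem_radical hreg (hash ▸ mem_maximalIdeal has a (by simp))
    have hfs_reg : IsWeaklyRegular R (cs ++ [h] ++ fs) :=
      ih hlen (ofList_perm as ▸ hash) (ofList_perm fs ▸ hfsh)
        (isWeaklyRegular_of_perm_of_subset_maximalIdeal hreg_h (perm as) (mem_maximalIdeal hash))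
    exact isWeaklyRegular_append_singleton_of_mem_radical
      (isWeaklyRegular_of_perm_of_subset_maximalIdeal hfs_reg (perm fs).symm
        (mem_maximalIdeal (ofList_perm fs ▸ hfsh)))
      (hfs ▸ mem_maximalIdeal hfsh h (by simp))

end RegularSequences

section Syzygies

variable {R : Type*} [CommRing R]

theorem ofList_map {α : Type*} (φ : α → R) (l : List α) :
    Ideal.ofList (l.map φ) = Ideal.span (φ '' {a | a ∈ l}) := by
  simp only [Ideal.ofList, List.mem_map]
  rfl

theorem ofList_ofFn {n : ℕ} (f : Fin n → R) :
    Ideal.ofList (List.ofFn f) = Ideal.span (Set.range f) := by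
  simp only [Ideal.ofList, List.mem_ofFn]
  rfl

theorem mem_span_range_of_isWeaklyRegular {n : ℕ} {f g : Fin n → R}
    (hf : IsWeaklyRegular R (List.ofFn f)) (hgf : ∑ i, g i * f i = 0) (i : Fin n) :
    g i ∈ Ideal.span (Set.range f) := by
  induction n with
  | zero => exact i.elim0
  | succ n ih =>
    rw [List.ofFn_succ', List.concat_eq_append, isWeaklyRegular_append_iff,
      isWeaklyRegular_singleton_iff, isSMulRegular_quotient_iff_mem_of_smul_mem, ofList_ofFn] at hf
    simp only [smul_eq_mul, Ideal.mul_top] at hf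
    obtain ⟨hinit, hlast⟩ := hf
    rw [Fin.sum_univ_castSucc] at hgf
    have hg_last : g (Fin.last n) ∈ Ideal.span (Set.range fun j => f (Fin.castSucc j)) := by
      refine hlast _ ?_
      rw [mul_comm, eq_neg_of_add_eq_zero_right hgf]
      exact neg_mem (sum_mem fun j _ =>
        Ideal.mul_mem_left _ _ (Ideal.subset_span (Set.mem_range_self j)))
    have span_le : Ideal.span (Set.range fun j => f (Fin.castSucc j)) ≤ Ideal.span (Set.range f) :=
      Ideal.span_mono (Set.range_comp_subset_range Fin.castSucc f)
    obtain ⟨c, hc⟩ := Ideal.mem_span_range_iff_exists_fun.mp hg_last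
    have hsyz : ∑ j, (g (Fin.castSucc j) + c j * f (Fin.last n)) * f (Fin.castSucc j) = 0 := by
      rw [← hgf, ← hc, Finset.sum_mul, ← Finset.sum_add_distrib]
      exact Finset.sum_congr rfl fun j _ => by ring
    induction i using Fin.lastCases with
    | last => exact span_le hg_last
    | cast j =>
      exact (Ideal.add_mem_iff_left _ (Ideal.mul_mem_left _ _
        (Ideal.subset_span (Set.mem_range_self _)))).mp (span_le (ih hinit hsyz j))

end Syzygies

theorem under_map_pow_localization_of_isMaximal {R : Type*} [CommRing R] (M : Ideal R)
    [hM : M.IsMaximal] (r : ℕ) :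
    ((M ^ r).map (algebraMap R (Localization.AtPrime M))).under R = M ^ r := by
  obtain rfl | hr := eq_or_ne r 0
  · simp [Ideal.map_top]
  have hrad : (M ^ r).radical = M := by rw [Ideal.radical_pow M hr, hM.isPrime.radical]
  refine IsLocalization.under_map_of_isPrimary_disjoint M.primeCompl _
    (Ideal.isPrimary_of_isMaximal_radical (hrad.symm ▸ hM)) ?_
  exact disjoint_compl_left.mono_right (Ideal.pow_le_self hr)

section Forms

open MvPolynomial

theorem isWeaklyRegular_map_X {R σ : Type*} [CommRing R] {l : List σ} (hl : l.Nodup) :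
    IsWeaklyRegular (MvPolynomial σ R) (l.map (X : σ → MvPolynomial σ R)) := by
  induction l using List.reverseRecOn with
  | nil => exact .nil _ _
  | append_singleton l i ih =>
    obtain ⟨hnodup, -, hdisj⟩ := List.nodup_append.mp hl
    rw [List.map_append, List.map_singleton, isWeaklyRegular_append_iff,
      isWeaklyRegular_singleton_iff, isSMulRegular_quotient_iff_mem_of_smul_mem]
    refine ⟨ih hnodup, fun p hp => ?_⟩
    rw [ofList_map, smul_eq_mul, Ideal.mul_top, mem_ideal_span_X_image] at hp ⊢
    intro μ hμ
    obtain ⟨j, hj, hμj⟩ := hp (Finsupp.single i 1 + μ)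
      (by rwa [smul_eq_mul, mem_support_iff, coeff_X_mul, ← mem_support_iff])
    have hij : i ≠ j := fun h => hdisj j hj i (by simp) h.symm
    exact ⟨j, hj, by simpa [hij] using hμj⟩

theorem mem_idealOfVars_pow_of_isHomogeneous {R ι : Type*} [CommSemiring R] {p : MvPolynomial ι R}
    {e r : ℕ} (hp : p.IsHomogeneous e) (hre : r ≤ e) : p ∈ idealOfVars ι R ^ r :=
  (mem_pow_idealOfVars_iff' r p).mpr fun _ hμ => hp.coeff_eq_zero (by omega)

theorem eq_zero_of_isHomogeneous_of_mem_idealOfVars_pow {R ι : Type*} [CommSemiring R]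
    {p : MvPolynomial ι R} {e r : ℕ} (hp : p.IsHomogeneous e) (her : e < r)
    (hpr : p ∈ idealOfVars ι R ^ r) : p = 0 := by
  ext μ
  by_cases hμ : μ.degree = e
  · exact (mem_pow_idealOfVars_iff' r p).mp hpr μ (hμ ▸ her)
  · exact hp.coeff_eq_zero hμ

variable {K ι : Type*} [Field K]

theorem vanishingIdeal_singleton_zero : vanishingIdeal K {(0 : ι → K)} = idealOfVars ι K := by
  ext p
  rw [mem_vanishingIdeal_singleton_iff, ← pow_one (idealOfVars ι K), mem_pow_idealOfVars_iff']
  simp [Finsupp.degree_eq_zero_iff, constantCoeff_eq]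

instance isMaximal_idealOfVars : (idealOfVars ι K).IsMaximal :=
  vanishingIdeal_singleton_zero (K := K) (ι := ι) ▸ inferInstance

variable [IsAlgClosed K]

theorem radical_eq_idealOfVars [Finite ι] {I : Ideal (MvPolynomial ι K)}
    (hI : zeroLocus K I = {0}) :
    I.radical = idealOfVars ι K := by
  rw [← vanishingIdeal_zeroLocus_eq_radical (K := K), hI, vanishingIdeal_singleton_zero]

variable [Fintype ι]

theorem isWeaklyRegular_localization_of_zeroLocus_eq {l : List (MvPolynomial ι K)}
    (hlen : l.length = Fintype.card ι) (hl : zeroLocus K (Ideal.ofList l) = {0}) :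
    IsWeaklyRegular (Localization.AtPrime (idealOfVars ι K))
      (l.map (algebraMap _ (Localization.AtPrime (idealOfVars ι K)))) := by
  let A := Localization.AtPrime (idealOfVars ι K)
  let vars : List (MvPolynomial ι K) := Finset.univ.toList.map X
  have : IsNoetherianRing A :=
    IsLocalization.isNoetherianRing (idealOfVars ι K).primeCompl A inferInstance
  have radical_map {l : List (MvPolynomial ι K)}
      (hl : (Ideal.ofList l).radical = idealOfVars ι K) :
      (Ideal.ofList (l.map (algebraMap _ A))).radical = IsLocalRing.maximalIdeal A := by
    rw [← Ideal.map_ofList, ← IsLocalization.map_radical (idealOfVars ι K).primeCompl, hl,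
      Localization.AtPrime.map_eq_maximalIdeal]
  have radical_vars : (Ideal.ofList vars).radical = idealOfVars ι K := by
    have ofList_vars : Ideal.ofList vars = idealOfVars ι K := by
      simp [vars, ofList_map, idealOfVars]
    rw [ofList_vars, isMaximal_idealOfVars.isPrime.radical]
  refine isWeaklyRegular_append_of_radical_eq_maximalIdeal (cs := [])
    (as := vars.map (algebraMap _ A)) (by simp [vars, hlen]) (radical_map radical_vars)
    (radical_map (radical_eq_idealOfVars hl)) ?_
  exact (isWeaklyRegular_map_X (Finset.nodup_toList _)).of_isLocalization A
    (idealOfVars ι K).primeCompl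

theorem mem_idealOfVars_pow_of_sum_mul_eq_zero {f g : ι → MvPolynomial ι K} {r : ℕ}
    (hf : ∀ i, f i ∈ idealOfVars ι K ^ r)
    (hzero : zeroLocus K (Ideal.span (Set.range f)) = {0}) (hgf : ∑ i, g i * f i = 0) (i : ι) :
    g i ∈ idealOfVars ι K ^ r := by
  let φ := algebraMap (MvPolynomial ι K) (Localization.AtPrime (idealOfVars ι K))
  let e := Fintype.equivFin ι
  have hreg : IsWeaklyRegular (Localization.AtPrime (idealOfVars ι K))
      (List.ofFn fun j => φ (f (e.symm j))) := by
    have h := isWeaklyRegular_localization_of_zeroLocus_eq (l := List.ofFn fun j => f (e.symm j))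
      (by simp) (by
        rw [← hzero, ← e.symm.surjective.range_comp f, ofList_ofFn]
        rfl)
    rwa [List.map_ofFn] at h
  have hsyz : ∑ j, φ (g (e.symm j)) * φ (f (e.symm j)) = 0 := by
    simp only [← map_mul, ← map_sum]
    rw [Equiv.sum_comp e.symm fun i => g i * f i, hgf, map_zero]
  rw [← under_map_pow_localization_of_isMaximal (idealOfVars ι K) r]
  have hspan := mem_span_range_of_isWeaklyRegular hreg hsyz (e i)
  rw [e.symm_apply_apply] at hspan
  refine Ideal.mem_comap.mpr (Ideal.span_le.mpr ?_ hspan)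
  rintro _ ⟨j, rfl⟩
  exact Ideal.mem_map_of_mem φ (hf _)

theorem eq_zero_of_sum_mul_eq_zero {f g : ι → MvPolynomial ι K} {e r : ℕ} (her : e < r)
    (hf : ∀ i, (f i).IsHomogeneous r) (hg : ∀ i, (g i).IsHomogeneous e)
    (hzero : zeroLocus K (Ideal.span (Set.range f)) = {0}) (hgf : ∑ i, g i * f i = 0) : g = 0 :=
  funext fun i => eq_zero_of_isHomogeneous_of_mem_idealOfVars_pow (hg i) her
    (mem_idealOfVars_pow_of_sum_mul_eq_zero
      (fun i => mem_idealOfVars_pow_of_isHomogeneous (hf i) le_rfl) hzero hgf i)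

end Forms

section IsolatedPoints

open MvPolynomial

theorem mem_minimalPrimes_of_le_sup_sq {R : Type*} [CommRing R] {J M : Ideal R} [hM : M.IsPrime]
    (hfg : M.FG) (hJM : J ≤ M) (hle : M ≤ J ⊔ M ^ 2) : M ∈ J.minimalPrimes := by
  refine ⟨⟨hM, hJM⟩, fun p ⟨hp, hJp⟩ hpM x hx => ?_⟩
  -- By Nakayama, some `r ∈ 1 + M` multiplies `M` into `p`; as `r ∉ p`, this forces `M ≤ p`.
  obtain ⟨r, hr, hrM⟩ := Submodule.exists_sub_one_mem_and_smul_le_of_fg_of_le_sup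
    (I := M) (N := p) hfg le_rfl (hle.trans (sup_le_sup hJp (by rw [pow_two, smul_eq_mul])))
  have hrp : r ∉ p := fun hrp =>
    hM.one_notMem (by simpa using sub_mem (hpM hrp) hr)
  exact (hp.mem_or_mem (hrM (Submodule.smul_mem_pointwise_smul x r M hx))).resolve_left hrp

/-- The Zariski tangent space at `b` of the scheme cut out by `J`, as a space of vectors. -/
def tangentSpace {R σ : Type*} [CommRing R] [Fintype σ] (J : Ideal (MvPolynomial σ R))
    (b : σ → R) : Submodule R (σ → R) where
  carrier := {δ | ∀ P ∈ J, ∑ c, eval b (pderiv c P) * δ c = 0}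
  zero_mem' := by simp
  add_mem' hδ hε P hP := by
    simp [mul_add, Finset.sum_add_distrib, hδ P hP, hε P hP]
  smul_mem' a δ hδ P hP := by
    simp [mul_left_comm _ a, ← Finset.mul_sum, hδ P hP]

variable {K σ : Type*} [Field K] [Fintype σ]

theorem sub_linear_mem_vanishingIdeal_sq (b : σ → K) (P : MvPolynomial σ K) :
    P - C (eval b P) - ∑ c, C (eval b (pderiv c P)) * (X c - C (b c)) ∈
      vanishingIdeal K {b} ^ 2 := by
  classical
  have sub_C_mem (p : MvPolynomial σ K) : p - C (eval b p) ∈ vanishingIdeal K {b} := by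
    simp
  induction P using MvPolynomial.induction_on with
  | C a => simp
  | add p q hp hq =>
    convert add_mem hp hq using 1
    simp only [map_add, add_mul, Finset.sum_add_distrib]
    ring
  | mul_X p i hp =>
    have hprod : (p - C (eval b p)) * (X i - C (b i)) ∈ vanishingIdeal K {b} ^ 2 := by
      rw [pow_two]
      exact Ideal.mul_mem_mul (sub_C_mem p) (by simp)
    convert add_mem (Ideal.mul_mem_right (C (b i)) _ hp) hprod using 1
    have hsum : ∑ c, C (eval b (pderiv c (p * X i))) * (X c - C (b c)) =
        (∑ c, C (eval b (pderiv c p)) * (X c - C (b c))) * C (b i) +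
          C (eval b p) * (X i - C (b i)) := by
      simp only [pderiv_mul, pderiv_X, map_add, map_mul, eval_X, add_mul, Finset.sum_add_distrib,
        Finset.sum_mul]
      congr 1
      · exact Finset.sum_congr rfl fun c _ => by ring
      · rw [Finset.sum_eq_single i (fun c _ hc => by simp [hc]) (by simp)]
        simp
    rw [hsum, map_mul, map_mul, eval_X]
    ring

theorem vanishingIdeal_singleton_le_sup_sq {J : Ideal (MvPolynomial σ K)} {b : σ → K}
    (hb : b ∈ zeroLocus K J) (hJ : tangentSpace J b = ⊥) :
    vanishingIdeal K {b} ≤ J ⊔ vanishingIdeal K {b} ^ 2 := by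
  intro Q hQ
  by_contra hQJ
  -- A functional that kills `J + M ^ 2` but not `Q ∈ M` would be a nonzero tangent vector.
  obtain ⟨f, hfQ, hf⟩ := Submodule.exists_le_ker_of_notMem
    (p := (J ⊔ vanishingIdeal K {b} ^ 2).restrictScalars K) hQJ
  let δ : σ → K := fun c => f (X c - C (b c))
  have f_eq {P : MvPolynomial σ K} (hP : P ∈ vanishingIdeal K {b}) :
      f P = ∑ c, eval b (pderiv c P) * δ c := by
    have htaylor := hf (Ideal.mem_sup_right (sub_linear_mem_vanishingIdeal_sq b P))
    rw [mem_vanishingIdeal_singleton_iff, aeval_eq_eval] at hP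
    simpa [hP, ← smul_eq_C_mul, sub_eq_zero, δ] using htaylor
  have hδ : δ ∈ tangentSpace J b := fun P hP => by
    rw [← f_eq ((mem_vanishingIdeal_singleton_iff b P).mpr (hb P hP))]
    exact hf (Ideal.mem_sup_left hP)
  rw [hJ, Submodule.mem_bot] at hδ
  exact hfQ (by simp [f_eq hQ, hδ])

theorem finite_setOf_tangentSpace_eq_bot (J : Ideal (MvPolynomial σ K)) :
    {b ∈ zeroLocus K J | tangentSpace J b = ⊥}.Finite := by
  refine Set.Finite.of_finite_image (f := fun b => vanishingIdeal K {b})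
    ((Ideal.finite_minimalPrimes_of_isNoetherianRing _ J).subset ?_) fun b _ c _ hbc => ?_
  · rintro _ ⟨b, ⟨hb, hJ⟩, rfl⟩
    exact mem_minimalPrimes_of_le_sup_sq (IsNoetherian.noetherian _)
      (fun P hP => (mem_vanishingIdeal_singleton_iff b P).mpr (hb P hP))
      (vanishingIdeal_singleton_le_sup_sq hb hJ)
  · ext i
    have hmem : (X i - C (c i) : MvPolynomial σ K) ∈ vanishingIdeal K {b} := by
      rw [show vanishingIdeal K {b} = vanishingIdeal K {c} from hbc,
        mem_vanishingIdeal_singleton_iff]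
      simp
    simpa [mem_vanishingIdeal_singleton_iff, sub_eq_zero] using hmem

end IsolatedPoints

section Graphs

open MvPolynomial Matrix

theorem derivation_aeval {R A M τ : Type*} [CommSemiring R] [CommSemiring A] [Algebra R A]
    [AddCommMonoid M] [Module A M] [Module R M] [Fintype τ] (D : Derivation R A M) (q : τ → A)
    (F : MvPolynomial τ R) : D (aeval q F) = ∑ k, aeval q (pderiv k F) • D (q k) := by
  classical
  induction F using MvPolynomial.induction_on with
  | C a => simp
  | add p r hp hr => simp only [map_add, hp, hr, add_smul, Finset.sum_add_distrib]
  | mul_X p i hp =>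
    simp only [map_mul, aeval_X, Derivation.leibniz, hp, pderiv_X, smul_eq_mul, map_add, add_smul,
      Finset.sum_add_distrib, Finset.smul_sum, mul_smul]
    congr 1
    rw [Finset.sum_eq_single i (fun k _ hk => by simp [hk]) (by simp)]
    simp

variable {ι κ : Type*} [Fintype ι]

section Semiring

variable {R : Type*} [CommSemiring R]

theorem eval_aeval {σ τ : Type*} (b : σ → R) (q : τ → MvPolynomial σ R) (F : MvPolynomial τ R) :
    eval b (aeval q F) = eval (eval b ∘ q) F :=
  aeval_bind₁ b q F

theorem eval_zero_of_isHomogeneous {σ : Type*} {F : MvPolynomial σ R} {d : ℕ}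
    (hF : F.IsHomogeneous d) (hd : d ≠ 0) : eval 0 F = 0 := by
  rw [eval_zero, constantCoeff_eq]
  exact hF.coeff_eq_zero (by simpa using hd.symm)

/-- The point over `t` of the graph of the linear map `t ↦ t ᵥ* A`. The coefficients lie in an
arbitrary semiring, so that `A` or `t` may also be generic, with polynomial entries. -/
def graphPoint (A : Matrix ι κ R) (t : ι → R) : ι ⊕ κ → R :=
  Sum.elim t (t ᵥ* A)

theorem comp_graphPoint {S : Type*} [CommSemiring S] (φ : R →+* S) (A : Matrix ι κ R) (t : ι → R) :
    φ ∘ graphPoint A t = graphPoint (A.map φ) (φ ∘ t) := by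
  ext (i | j)
  · rfl
  · exact RingHom.map_vecMul φ A t j

/-- The restriction of `F` to the graph of `A`, a polynomial in the coordinates of the base. -/
noncomputable def restrictToGraph (A : Matrix ι κ R) :
    MvPolynomial (ι ⊕ κ) R →ₐ[R] MvPolynomial ι R :=
  aeval (graphPoint (A.map C) X)

theorem eval_restrictToGraph (A : Matrix ι κ R) (F : MvPolynomial (ι ⊕ κ) R) (t : ι → R) :
    eval t (restrictToGraph A F) = eval (graphPoint A t) F := by
  rw [restrictToGraph, eval_aeval, comp_graphPoint]
  congr
  · ext; simp
  · ext; simp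

theorem eval_vecMul_map_C (A : Matrix ι κ R) (t : ι → R) (j : κ) :
    eval t ((X ᵥ* A.map C) j) = (t ᵥ* A) j := by
  simp [vecMul, dotProduct]

theorem isHomogeneous_vecMul_map_C (A : Matrix ι κ R) (j : κ) :
    ((X ᵥ* A.map C) j : MvPolynomial ι R).IsHomogeneous 1 :=
  IsHomogeneous.sum _ _ _ fun i _ => by
    simpa using (isHomogeneous_X R i).mul (isHomogeneous_C ι (A i j))

theorem isHomogeneous_restrictToGraph (A : Matrix ι κ R) {F : MvPolynomial (ι ⊕ κ) R} {d : ℕ}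
    (hF : F.IsHomogeneous d) : (restrictToGraph A F).IsHomogeneous d := by
  rw [← one_mul d]
  refine hF.aeval _ ?_
  rintro (i | j)
  · exact isHomogeneous_X R i
  · exact isHomogeneous_vecMul_map_C A j

theorem eval_aeval_graphPoint_mvPolynomialX (A : Matrix ι κ R) (t : ι → R)
    (F : MvPolynomial (ι ⊕ κ) R) :
    eval (Function.uncurry A) (aeval (graphPoint (mvPolynomialX ι κ R) (C ∘ t)) F) =
      eval (graphPoint A t) F := by
  rw [eval_aeval, comp_graphPoint]
  congr
  · ext; simp [Function.uncurry]
  · ext; simp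

theorem eval_pderiv_eq_zero_of_normal [Finite κ] {A : Matrix ι κ R} {F : MvPolynomial (ι ⊕ κ) R}
    {t : ι → R} (hF : restrictToGraph A F = 0)
    (hnormal : ∀ j, eval (graphPoint A t) (pderiv (.inr j) F) = 0) (c : ι ⊕ κ) :
    eval (graphPoint A t) (pderiv c F) = 0 := by
  classical
  cases nonempty_fintype κ
  obtain i | j := c
  · have hchain : pderiv i (restrictToGraph A F) =
        ∑ k, restrictToGraph A (pderiv k F) • pderiv i (graphPoint (A.map C) X k) :=
      derivation_aeval _ _ _
    have heval := congrArg (eval t) hchain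
    rw [hF, Fintype.sum_sum_type] at heval
    simp only [smul_eq_mul, map_zero, map_add, map_sum, map_mul, eval_restrictToGraph, hnormal,
      zero_mul, Finset.sum_const_zero, add_zero] at heval
    simpa [graphPoint, pderiv_X, Pi.single_apply] using heval.symm
  · exact hnormal j

end Semiring

theorem restrictToGraph_eq_zero_iff {R : Type*} [CommRing R] [IsDomain R] [Infinite R]
    {A : Matrix ι κ R} {F : MvPolynomial (ι ⊕ κ) R} :
    restrictToGraph A F = 0 ↔ ∀ t, eval (graphPoint A t) F = 0 := by
  simp only [MvPolynomial.funext_iff, eval_restrictToGraph, map_zero]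

/-- The ideal of equations on the entries of a matrix which say that `F` vanishes on its graph. -/
noncomputable def graphIdeal {R : Type*} [CommRing R] (F : MvPolynomial (ι ⊕ κ) R) :
    Ideal (MvPolynomial (ι × κ) R) :=
  Ideal.span (Set.range fun t : ι → R => aeval (graphPoint (mvPolynomialX ι κ R) (C ∘ t)) F)

theorem sum_mul_restrictToGraph_pderiv_eq_zero {R : Type*} [CommRing R] [IsDomain R] [Infinite R]
    [Fintype κ] {A δ : Matrix ι κ R} {F : MvPolynomial (ι ⊕ κ) R}
    (hδ : Function.uncurry δ ∈ tangentSpace (graphIdeal F) (Function.uncurry A)) :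
    ∑ j, (X ᵥ* δ.map C) j * restrictToGraph A (pderiv (.inr j) F) = 0 := by
  classical
  refine MvPolynomial.funext fun t => ?_
  let q := graphPoint (mvPolynomialX ι κ R) (C ∘ t)
  let D := mkDerivation R fun c => C (σ := ι × κ) (Function.uncurry δ c)
  have D_eq (P : MvPolynomial (ι × κ) R) :
      D P = ∑ c, pderiv c P * C (Function.uncurry δ c) := by
    simpa [D, mkDerivation_X] using derivation_aeval D X P
  have D_base (i : ι) : D (q (.inl i)) = 0 := by simp [q, graphPoint]
  have D_normal (j : κ) : D (q (.inr j)) = C ((t ᵥ* δ) j) := by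
    simp [q, D, graphPoint, vecMul, dotProduct, mkDerivation_X, Function.uncurry]
  have hzero : eval (Function.uncurry A) (D (aeval q F)) = 0 := by
    simpa [D_eq] using hδ _ (Ideal.subset_span (Set.mem_range_self t))
  simpa only [derivation_aeval, Fintype.sum_sum_type, D_base, D_normal, mul_zero, smul_eq_mul,
    map_add, zero_mul, Finset.sum_const_zero, zero_add, map_sum, map_mul, eval_C, q, mul_comm,
    eval_aeval_graphPoint_mvPolynomialX, eval_restrictToGraph, eval_vecMul_map_C, map_zero]
    using hzero

variable {K : Type*} [Field K]

theorem uncurry_mem_zeroLocus_graphIdeal {A : Matrix ι κ K} {F : MvPolynomial (ι ⊕ κ) K} :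
    Function.uncurry A ∈ zeroLocus K (graphIdeal F) ↔ ∀ t, eval (graphPoint A t) F = 0 := by
  simp only [graphIdeal, zeroLocus_span, Set.forall_mem_range, Set.mem_ofPred_eq, aeval_eq_eval,
    eval_aeval_graphPoint_mvPolynomialX]

/-- Away from the origin, `W` lies in the smooth locus of the affine cone `F = 0`; that is, the
projectivization of `W` is contained in the smooth locus of the projective hypersurface `F = 0`. -/
def IsContainedInSmoothLocus {σ : Type*} (F : MvPolynomial σ K) (W : Submodule K (σ → K)) : Prop :=
  ∀ v ∈ W, v ≠ 0 → eval v F = 0 ∧ ∃ i, eval v (pderiv i F) ≠ 0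

/-- The graph of the linear map `t ↦ t ᵥ* A`. -/
def graphSubspace (A : Matrix ι κ K) : Submodule K (ι ⊕ κ → K) :=
  LinearMap.eqLocus (A.vecMulLinear ∘ₗ LinearMap.funLeft K K Sum.inl)
    (LinearMap.funLeft K K Sum.inr)

theorem mem_graphSubspace {A : Matrix ι κ K} {v : ι ⊕ κ → K} :
    v ∈ graphSubspace A ↔ (v ∘ Sum.inl) ᵥ* A = v ∘ Sum.inr :=
  Iff.rfl

theorem graphPoint_mem_graphSubspace (A : Matrix ι κ K) (t : ι → K) :
    graphPoint A t ∈ graphSubspace A :=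
  rfl

theorem eval_graphPoint_eq_zero {A : Matrix ι κ K} {F : MvPolynomial (ι ⊕ κ) K} {d : ℕ}
    (hF : F.IsHomogeneous d) (hd : d ≠ 0) (hA : IsContainedInSmoothLocus F (graphSubspace A))
    (t : ι → K) : eval (graphPoint A t) F = 0 := by
  obtain h | h := eq_or_ne (graphPoint A t) 0
  · rw [h, eval_zero_of_isHomogeneous hF hd]
  · exact (hA _ (graphPoint_mem_graphSubspace A t) h).1

theorem zeroLocus_span_normal_pderiv [Infinite K] [Finite κ] {A : Matrix ι κ K}
    {F : MvPolynomial (ι ⊕ κ) K} {d : ℕ} (hd : 1 < d) (hF : F.IsHomogeneous d)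
    (hA : IsContainedInSmoothLocus F (graphSubspace A)) :
    zeroLocus K (Ideal.span (Set.range fun j => restrictToGraph A (pderiv (.inr j) F))) = {0} := by
  ext t
  simp only [zeroLocus_span, Set.forall_mem_range, Set.mem_ofPred_eq, Set.mem_singleton_iff,
    aeval_eq_eval]
  refine ⟨fun hnormal => ?_, ?_⟩
  · simp only [eval_restrictToGraph] at hnormal
    by_contra ht
    have hpoint : graphPoint A t ≠ 0 := fun h => ht (congrArg (· ∘ Sum.inl) h)
    obtain ⟨c, hc⟩ := (hA _ (graphPoint_mem_graphSubspace A t) hpoint).2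
    refine hc (eval_pderiv_eq_zero_of_normal ?_ hnormal c)
    exact restrictToGraph_eq_zero_iff.mpr (eval_graphPoint_eq_zero hF (by omega) hA)
  · rintro rfl j
    exact eval_zero_of_isHomogeneous (isHomogeneous_restrictToGraph A hF.pderiv) (by omega)

variable [IsAlgClosed K] {F : MvPolynomial (ι ⊕ ι) K} {d : ℕ}

theorem tangentSpace_graphIdeal_eq_bot {A : Matrix ι ι K} (hd : 3 ≤ d) (hF : F.IsHomogeneous d)
    (hA : IsContainedInSmoothLocus F (graphSubspace A)) :
    tangentSpace (graphIdeal F) (Function.uncurry A) = ⊥ := by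
  classical
  rw [eq_bot_iff]
  intro δ hδ
  have : Infinite K := IsAlgClosed.instInfinite
  have hlinear : (fun j => (X ᵥ* (of (Function.curry δ)).map C) j : ι → MvPolynomial ι K) = 0 :=
    eq_zero_of_sum_mul_eq_zero (e := 1) (r := d - 1) (by omega)
      (fun j => isHomogeneous_restrictToGraph A hF.pderiv)
      (isHomogeneous_vecMul_map_C _) (zeroLocus_span_normal_pderiv (by omega) hF hA)
      (sum_mul_restrictToGraph_pderiv_eq_zero hδ)
  ext ⟨i, j⟩
  have heval := congrArg (eval (Pi.single i 1)) (congrFun hlinear j)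
  simpa [eval_vecMul_map_C] using heval

theorem finite_setOf_graphSubspace_isContainedInSmoothLocus (hd : 3 ≤ d) (hF : F.IsHomogeneous d) :
    {A : Matrix ι ι K | IsContainedInSmoothLocus F (graphSubspace A)}.Finite := by
  refine Set.Finite.of_finite_image (f := fun A : ι → ι → K => Function.uncurry A)
    ((finite_setOf_tangentSpace_eq_bot (graphIdeal F)).subset ?_)
    Function.uncurry_injective.injOn
  rintro _ ⟨A, hA, rfl⟩
  exact ⟨uncurry_mem_zeroLocus_graphIdeal.mpr (eval_graphPoint_eq_zero hF (by omega) hA),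
    tangentSpace_graphIdeal_eq_bot hd hF hA⟩

end Graphs

section Coordinates

open MvPolynomial Matrix Module

variable {K : Type*} [Field K]

theorem isContainedInSmoothLocus_rename {σ τ : Type*} {F : MvPolynomial τ K} (e : σ ≃ τ)
    {W : Submodule K (σ → K)}
    (h : IsContainedInSmoothLocus F (W.comap (LinearMap.funLeft K K e))) :
    IsContainedInSmoothLocus (rename e.symm F) W := by
  intro v hv hv0
  obtain ⟨hF, c, hc⟩ := h (v ∘ e.symm) (by simpa [LinearMap.funLeft, Function.comp_assoc] using hv)
    (fun h => hv0 (funext fun i => by simpa using congrFun h (e i)))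
  refine ⟨by rwa [eval_rename], e.symm c, ?_⟩
  rwa [pderiv_rename e.symm.injective, eval_rename]

theorem exists_eq_comap_graphSubspace {ι κ τ : Type*} [Fintype ι]
    {W : Submodule K (τ → K)} (e : ι ⊕ κ ≃ τ)
    (hW : Function.Bijective (LinearMap.funLeft K K (e ∘ Sum.inl) ∘ₗ W.subtype)) :
    ∃ A : Matrix ι κ K, W = (graphSubspace A).comap (LinearMap.funLeft K K e) := by
  classical
  let E : W ≃ₗ[K] (ι → K) := LinearEquiv.ofBijective _ hW
  let L : (ι → K) →ₗ[K] (κ → K) := LinearMap.funLeft K K (e ∘ Sum.inr) ∘ₗ W.subtype ∘ₗ E.symm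
  refine ⟨(LinearMap.toMatrix' L)ᵀ, Submodule.ext fun v => ?_⟩
  rw [Submodule.mem_comap, mem_graphSubspace, vecMul_transpose, LinearMap.toMatrix'_mulVec]
  refine ⟨fun hv => ?_, fun hL => ?_⟩
  · exact congrArg (fun w : W => (w : τ → K) ∘ e ∘ Sum.inr) (E.symm_apply_apply ⟨v, hv⟩)
  · have hv : (E.symm (v ∘ e ∘ Sum.inl) : τ → K) = v := by
      refine e.surjective.injective_comp_right (funext fun c => ?_)
      obtain i | j := c
      · exact congrFun (E.apply_symm_apply (v ∘ e ∘ Sum.inl)) i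
      · exact congrFun hL j
    exact hv ▸ (E.symm (v ∘ e ∘ Sum.inl)).2

theorem exists_set_bijective_restrict {τ : Type*} [Finite τ] (W : Submodule K (τ → K)) :
    ∃ s : Set τ, Function.Bijective (LinearMap.funLeft K K ((↑) : s → τ) ∘ₗ W.subtype) := by
  classical
  cases nonempty_fintype τ
  let coord (c : τ) : Dual K W := LinearMap.proj c ∘ₗ W.subtype
  obtain ⟨s, -, -, hspan, hs⟩ := exists_linearIndepOn_extension (v := coord)
    (linearIndepOn_empty K coord) (Set.empty_subset Set.univ)
  have hinj : Function.Injective (LinearMap.funLeft K K ((↑) : s → τ) ∘ₗ W.subtype) := by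
    refine (injective_iff_map_eq_zero _).mpr fun w hw => Subtype.ext (funext fun c => ?_)
    have span_le : Submodule.span K (coord '' s) ≤ LinearMap.ker (Dual.eval K W w) :=
      Submodule.span_le.mpr (Set.forall_mem_image.mpr fun c hc => congrFun hw ⟨c, hc⟩)
    exact span_le (hspan (Set.mem_image_of_mem coord (Set.mem_univ c)))
  have hcard : finrank K W = finrank K (s → K) := by
    refine (LinearMap.finrank_le_finrank_of_injective hinj).antisymm ?_
    rw [finrank_fintype_fun_eq_card, ← Subspace.dual_finrank_eq]
    exact LinearIndependent.fintype_card_le_finrank hs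
  exact ⟨s, hinj, (LinearMap.injective_iff_surjective_of_finrank_eq_finrank hcard).mp hinj⟩

variable {τ : Type*} [Fintype τ]

theorem exists_equiv_bijective_restrict_inl {ι κ : Type*} [Fintype ι] [Fintype κ]
    {W : Submodule K (τ → K)} (hι : Fintype.card ι = finrank K W)
    (hκ : Fintype.card ι + Fintype.card κ = Fintype.card τ) :
    ∃ e : ι ⊕ κ ≃ τ, Function.Bijective (LinearMap.funLeft K K (e ∘ Sum.inl) ∘ₗ W.subtype) := by
  classical
  obtain ⟨s, hs⟩ := exists_set_bijective_restrict W
  have hs_card : Fintype.card ι = Fintype.card s := by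
    rw [hι, (LinearEquiv.ofBijective _ hs).finrank_eq, finrank_fintype_fun_eq_card]
  have hs_compl_card : Fintype.card κ = Fintype.card (sᶜ : Set τ) := by
    rw [Fintype.card_compl_set]
    omega
  let eι : ι ≃ s := Fintype.equivOfCardEq hs_card
  let eκ : κ ≃ (sᶜ : Set τ) := Fintype.equivOfCardEq hs_compl_card
  exact ⟨(Equiv.sumCongr eι eκ).trans (Equiv.Set.sumCompl s),
    (LinearEquiv.funCongrLeft K K eι).bijective.comp hs⟩

theorem finite_setOf_isContainedInSmoothLocus [IsAlgClosed K] {n d : ℕ}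
    (hτ : Fintype.card τ = 2 * n) (hd : 3 ≤ d) {F : MvPolynomial τ K} (hF : F.IsHomogeneous d) :
    {W : Submodule K (τ → K) | finrank K W = n ∧ IsContainedInSmoothLocus F W}.Finite := by
  refine (Set.finite_iUnion fun e : Fin n ⊕ Fin n ≃ τ =>
    (finite_setOf_graphSubspace_isContainedInSmoothLocus hd
      (hF.rename_isHomogeneous (f := e.symm))).image
        fun A => (graphSubspace A).comap (LinearMap.funLeft K K e)).subset ?_
  rintro W ⟨hn, hW⟩
  obtain ⟨e, he⟩ := exists_equiv_bijective_restrict_inl (ι := Fin n) (κ := Fin n) (W := W)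
    (by simpa using hn.symm) (by simp [hτ, two_mul])
  obtain ⟨A, rfl⟩ := exists_eq_comap_graphSubspace e he
  exact Set.mem_iUnion.mpr ⟨e, A, isContainedInSmoothLocus_rename e hW, rfl⟩

end Coordinates

end LinearSubspacesOfHypersurfaces

open LinearSubspacesOfHypersurfaces MvPolynomial in
theorem statement9_general {k K τ : Type*} [CommRing k] [Field K] [IsAlgClosed K] [Algebra k K]
    [Fintype τ] {n d : ℕ} (hτ : Fintype.card τ = 2 * n) (hd : 3 ≤ d) {F : MvPolynomial τ k}
    (hF : F.IsHomogeneous d) :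
    {W : Submodule K (τ → K) | Module.finrank K W = n ∧
      ∀ v ∈ W, v ≠ 0 → aeval v F = 0 ∧ ∃ i, aeval v (pderiv i F) ≠ 0}.Finite := by
  simpa only [IsContainedInSmoothLocus, pderiv_map, eval_map, ← aeval_def] using
    finite_setOf_isContainedInSmoothLocus hτ hd (hF.map (algebraMap k K))

/-- **Corollary (Debarre/Starr, appendix).** Let n = 2m+1 and let X ⊂ Pⁿ be a
hypersurface of degree d ≥ 3 over a field k, cut out by a nonzero form F of degree d.
Then only finitely many m-planes (over the algebraic closure, given as
(m+1)-dimensional linear subspaces of the geometric affine cone) are contained in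
the smooth locus X_sm of X, i.e. consist entirely of points of X at which some
partial derivative of F is non-zero.  In particular a smooth hypersurface of degree
d ≥ 3 in P^{2m+1} contains at most finitely many m-planes: its Fano variety F_m(X)
is finite. -/
theorem statement9 (k : Type) [Field k] (m d : ℕ) (hd : 3 ≤ d)
    (F : MvPolynomial (Fin (2 * m + 1 + 1)) k) (hF : F.IsHomogeneous d)
    (hF0 : F ≠ 0) :
    {W : Submodule (AlgebraicClosure k) (Fin (2 * m + 1 + 1) → AlgebraicClosure k) |
      Module.finrank (AlgebraicClosure k) W = m + 1 ∧
      ∀ v ∈ W, v ≠ 0 → MvPolynomial.aeval v F = 0 ∧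
        ∃ i, MvPolynomial.aeval v (MvPolynomial.pderiv i F) ≠ 0}.Finite :=
  statement9_general (by simp; omega) hd hF
end

section
/- Let d ≥ 3 and n ≥ 5, and let X ⊂ P^n be a non-singular hypersurface of degree d. Then for every line L ∈ F_1(X) and every subvariety Z ⊆ F_2(X), one has dim C_L(Z) ≤ n − 3; equivalently, the variety Z_L = {P ∈ Z : L ⊂ P} of planes in Z containing L satisfies dim Z_L ≤ n − 5. -/
noncomputable section

abbrev KK : Type := AlgebraicClosure ℚ

abbrev Pn (N : ℕ) := Projectivization KK (Fin (N + 1) → KK)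

/-- The common zero set in projective space of a family of polynomials
(membership tested on the chosen representative). -/
def projZeros {N : ℕ} (S : Set (MvPolynomial (Fin (N + 1)) KK)) : Set (Pn N) :=
  {x | ∀ f ∈ S, MvPolynomial.eval x.rep f = 0}

/-- Zariski-closed subsets of projective space: common zero sets of families of forms. -/
def ProjClosed {N : ℕ} (V : Set (Pn N)) : Prop :=
  ∃ S : Set (MvPolynomial (Fin (N + 1)) KK),
    (∀ f ∈ S, ∃ d, f.IsHomogeneous d) ∧ V = projZeros S

def ProjIrred {N : ℕ} (V : Set (Pn N)) : Prop :=
  V.Nonempty ∧ ∀ C₁ C₂ : Set (Pn N), ProjClosed C₁ → ProjClosed C₂ →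
    V ⊆ C₁ ∪ C₂ → V ⊆ C₁ ∨ V ⊆ C₂

/-- A (geometrically integral) projective variety: an irreducible Zariski-closed set. -/
def ProjVariety {N : ℕ} (V : Set (Pn N)) : Prop := ProjClosed V ∧ ProjIrred V

/-- Dimension of a subset of projective space: Krull dimension of the poset of
irreducible closed subsets contained in it. The empty set has dimension `⊥`. -/
def projDim {N : ℕ} (V : Set (Pn N)) : WithBot ENat :=
  Order.krullDim {W : Set (Pn N) // ProjVariety W ∧ W ⊆ V}

/-- The set of projective points lying on a linear subspace. -/
def planeSet {N : ℕ} (W : Submodule KK (Fin (N + 1) → KK)) : Set (Pn N) :=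
  {x | x.rep ∈ W}

/-- Degree of a subset of projective space: the largest (finite) number of points
in a linear section. -/
def projDeg {N : ℕ} (V : Set (Pn N)) : ℕ :=
  sSup {k : ℕ | ∃ W : Submodule KK (Fin (N + 1) → KK),
    (V ∩ planeSet W).Finite ∧ (V ∩ planeSet W).ncard = k}

/-- The hypersurface cut out by a form. -/
def hyp {n : ℕ} (F : MvPolynomial (Fin (n + 1)) KK) : Set (Pn n) :=
  {x | MvPolynomial.eval x.rep F = 0}

/-- A form over the algebraic closure is non-singular if its partial derivatives
have no common non-trivial zero. -/
def NonsingularK {n : ℕ} (F : MvPolynomial (Fin (n + 1)) KK) : Prop :=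
  ∀ z : Fin (n + 1) → KK,
    (∀ i, MvPolynomial.eval z (MvPolynomial.pderiv i F) = 0) → z = 0

/-- The Fano set of (projective) m-planes contained in X, as linear subspaces of
dimension m+1. -/
def Fano (m n : ℕ) (X : Set (Pn n)) : Set (Submodule KK (Fin (n + 1) → KK)) :=
  {W | Module.finrank KK W = m + 1 ∧ planeSet W ⊆ X}

/-- Closed subsets of the Grassmannian of m-planes in Pⁿ, described via Stiefel
coordinates: Z is closed iff the set of (m+1)-tuples of vectors which, when
linearly independent, span a member of Z, is Zariski-closed in affine space. -/
def GrClosed (m n : ℕ) (Z : Set (Submodule KK (Fin (n + 1) → KK))) : Prop :=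
  (∀ W ∈ Z, Module.finrank KK W = m + 1) ∧
  ∃ S : Set (MvPolynomial (Fin (m + 1) × Fin (n + 1)) KK),
    {v : Fin (m + 1) → Fin (n + 1) → KK |
      LinearIndependent KK v → Submodule.span KK (Set.range v) ∈ Z}
    = {v | ∀ f ∈ S, MvPolynomial.eval (fun p => v p.1 p.2) f = 0}

def GrIrred (m n : ℕ) (Z : Set (Submodule KK (Fin (n + 1) → KK))) : Prop :=
  Z.Nonempty ∧ ∀ C₁ C₂ : Set (Submodule KK (Fin (n + 1) → KK)),
    GrClosed m n C₁ → GrClosed m n C₂ → Z ⊆ C₁ ∪ C₂ → Z ⊆ C₁ ∨ Z ⊆ C₂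

/-- A (geometrically integral) subvariety of the Grassmannian. -/
def GrVariety (m n : ℕ) (Z : Set (Submodule KK (Fin (n + 1) → KK))) : Prop :=
  GrClosed m n Z ∧ GrIrred m n Z

/-- Dimension of a subset of the Grassmannian of m-planes in Pⁿ. -/
def grDim (m n : ℕ) (Z : Set (Submodule KK (Fin (n + 1) → KK))) : WithBot ENat :=
  Order.krullDim {W : Set (Submodule KK (Fin (n + 1) → KK)) // GrVariety m n W ∧ W ⊆ Z}

/-- D(Z): the union of the planes parametrised by Z. -/
def DSet {n : ℕ} (Z : Set (Submodule KK (Fin (n + 1) → KK))) : Set (Pn n) :=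
  {x | ∃ Λ ∈ Z, x.rep ∈ Λ}

/-- A primitive integer vector: the gcd of its coordinates is 1. -/
def IsPrimitiveVec {n : ℕ} (x : Fin n → ℤ) : Prop := Finset.univ.gcd x = 1

/-- Height of an integer vector: the maximum modulus of its coordinates. -/
def heightVec {n : ℕ} (x : Fin n → ℤ) : ℝ :=
  ((Finset.univ.sup fun i => (x i).natAbs : ℕ) : ℝ)

def coeK {n : ℕ} (x : Fin n → ℤ) : Fin n → KK := fun i => ((x i : ℤ) : KK)

def coeQ {n : ℕ} (x : Fin n → ℤ) : Fin n → ℚ := fun i => ((x i : ℤ) : ℚ)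

/-- The number of rational points of height at most B on a subset V of projective
space, counted via primitive integer vectors (each projective rational point
corresponds to exactly two primitive vectors). -/
def NV {n : ℕ} (V : Set (Pn n)) (B : ℝ) : ℕ :=
  Set.ncard {x : Fin (n + 1) → ℤ | IsPrimitiveVec x ∧ heightVec x ≤ B ∧
    ∃ h : coeK x ≠ 0, Projectivization.mk KK (coeK x) h ∈ V}

/-- An integer form is non-singular if its partial derivatives have no common
non-trivial zero over the algebraic closure of ℚ. -/
def NonsingularZ {n : ℕ} (F : MvPolynomial (Fin (n + 1)) ℤ) : Prop :=
  ∀ z : Fin (n + 1) → KK,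
    (∀ i, MvPolynomial.aeval z (MvPolynomial.pderiv i F) = 0) → z = 0

/-- Base change of an integer polynomial to the algebraic closure of ℚ. -/
def mapK {n : ℕ} (F : MvPolynomial (Fin (n + 1)) ℤ) : MvPolynomial (Fin (n + 1)) KK :=
  MvPolynomial.map (Int.castRingHom KK) F

/-- The Plücker height of the rational m-plane spanned by the integer vectors v:
the maximum modulus of the (m+1)×(m+1) minors, divided by their gcd. -/
def pluckerHeight {m n : ℕ} (v : Fin (m + 1) → Fin (n + 1) → ℤ) : ℕ :=
  (Finset.univ.sup fun s : Fin (m + 1) → Fin (n + 1) =>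
    (Matrix.det (Matrix.of fun i j => v i (s j))).natAbs) /
  (Finset.univ.gcd fun s : Fin (m + 1) → Fin (n + 1) =>
    (Matrix.det (Matrix.of fun i j => v i (s j))).natAbs)

def betaExp (k : ℕ) : ℝ := if k ≤ 3 then 0 else 1/4

def sigmaExp (n k : ℕ) : ℝ :=
  if (k : ℝ) ≤ ((n : ℝ) - 1) / 2 then (k : ℝ) + 1 else (k : ℝ) + betaExp k

def tauExp (n k : ℕ) : ℝ :=
  if (k : ℝ) < ((n : ℝ) - 1) / 2 then (k : ℝ) + 1 else (k : ℝ) + betaExp k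

/-- E: the union of the (n-1)/2-planes contained in X (for n odd; empty for n even). -/
def bigE {n : ℕ} (X : Set (Pn n)) : Set (Pn n) :=
  {x | n % 2 = 1 ∧ ∃ W : Submodule KK (Fin (n + 1) → KK),
    Module.finrank KK W = (n - 1) / 2 + 1 ∧ planeSet W ⊆ X ∧ x ∈ planeSet W}

/-- The cone of lines contained in X passing through x. -/
def coneOfLines {n : ℕ} (X : Set (Pn n)) (x : Pn n) : Set (Pn n) :=
  {y | ∃ L : Submodule KK (Fin (n + 1) → KK),
    Module.finrank KK L = 2 ∧ planeSet L ⊆ X ∧ x.rep ∈ L ∧ y.rep ∈ L}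

/-!
Dimensions are those of vector spaces. The planes of `X` containing `L` lie in the tangent
hyperplanes of `X` at all points of `L`, hence in the linear space `T` cut out by these hyperplanes,
and in `T ∩ X`. If `T` had codimension less than `dim L`, the differential of the equation of `X`
along `L` would be given by fewer than `dim L` forms of positive degree; these have a common nonzero
zero on `L`, a singular point of `X`. So `dim T + dim L ≤ n + 1`. When `T` is not contained in `X`,
its irreducibility makes `T ∩ X` smaller by one more dimension. When `T` is contained in `X`, it
lies in the tangent hyperplanes of `X` at its points, so the same bound with `T` in place of `L`
gives `2 dim T ≤ n + 1`, and `(n + 1) / 2 ≤ n - 2` because `n ≥ 5`.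
-/

section Polynomials

open MvPolynomial

variable {σ K : Type*} [Field K]

lemma eval_smul_of_isHomogeneous {f : MvPolynomial σ K} {d : ℕ} (hf : f.IsHomogeneous d)
    (c : K) (v : σ → K) : eval (c • v) f = c ^ d * eval v f := by
  rw [eval_eq, eval_eq, Finset.mul_sum]
  refine Finset.sum_congr rfl fun m hm => ?_
  have hdeg : ∑ i ∈ m.support, m i = d := (hf.degree_eq_sum_deg_support hm).symm
  simp only [Pi.smul_apply, smul_eq_mul, mul_pow, Finset.prod_mul_distrib,
    Finset.prod_pow_eq_pow_sum, hdeg]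
  ring

lemma eval_zero_of_isHomogeneous {f : MvPolynomial σ K} {d : ℕ} (hf : f.IsHomogeneous d)
    (hd : d ≠ 0) : eval 0 f = 0 := by
  simpa [hd] using eval_smul_of_isHomogeneous hf 0 0

/-- The restriction of a polynomial to the parametrised line `t ↦ x + t • y`. -/
def lineRestrict (x y : σ → K) : MvPolynomial σ K →ₐ[K] Polynomial K :=
  aeval fun i => Polynomial.C (x i) + Polynomial.C (y i) * Polynomial.X

lemma eval_lineRestrict (x y : σ → K) (t : K) (f : MvPolynomial σ K) :
    (lineRestrict x y f).eval t = eval (x + t • y) f := by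
  have hcomp : (Polynomial.aeval t).comp (lineRestrict x y) = aeval (x + t • y) := by
    ext i
    simp [lineRestrict, mul_comm t]
  simpa [aeval_eq_eval, Polynomial.coe_aeval_eq_eval] using DFunLike.congr_fun hcomp f

lemma isPrime_vanishingIdeal_submodule [Infinite K] (T : Submodule K (σ → K)) :
    (vanishingIdeal K (T : Set (σ → K))).IsPrime := by
  refine ⟨fun htop => ?_, fun {f g} hfg => ?_⟩
  · have hone : (1 : MvPolynomial σ K) ∈ vanishingIdeal K (T : Set (σ → K)) := htop ▸ trivial
    simpa using hone 0 T.zero_mem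
  · by_contra! ⟨hf, hg⟩
    simp only [mem_vanishingIdeal_iff, not_forall, SetLike.mem_coe] at hf hg
    obtain ⟨x, hx, hfx⟩ := hf
    obtain ⟨y, hy, hgy⟩ := hg
    have hline : lineRestrict x (y - x) (f * g) = 0 := by
      refine Polynomial.funext fun t => ?_
      rw [eval_lineRestrict, Polynomial.eval_zero]
      exact hfg _ (T.add_mem hx (T.smul_mem t (T.sub_mem hy hx)))
    rcases mul_eq_zero.1 ((map_mul _ f g).symm.trans hline) with h | h
    · exact hfx (by simpa [aeval_eq_eval, h] using (eval_lineRestrict x (y - x) 0 f).symm)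
    · exact hgy (by simpa [aeval_eq_eval, h] using (eval_lineRestrict x (y - x) 1 g).symm)

/-- The linear form `φ`, viewed as a polynomial of degree one in the coordinates. -/
def linearForm [Fintype σ] (φ : (σ → K) →ₗ[K] K) : MvPolynomial σ K :=
  Fintype.linearCombination K X fun i => φ (Pi.basisFun K σ i)

lemma linearForm_isHomogeneous [Fintype σ] (φ : (σ → K) →ₗ[K] K) :
    (linearForm φ).IsHomogeneous 1 :=
  (homogeneousSubmodule σ K 1).sum_mem fun i _ =>
    (homogeneousSubmodule σ K 1).smul_mem _ (isHomogeneous_X K i)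

lemma eval_linearForm [Fintype σ] (φ : (σ → K) →ₗ[K] K) (v : σ → K) :
    eval v (linearForm φ) = φ v := by
  conv_rhs => rw [← (Pi.basisFun K σ).sum_repr v]
  simp [linearForm, Fintype.linearCombination_apply, smul_eval, mul_comm]

lemma exists_linearForm_of_notMem [Finite σ] {T : Submodule K (σ → K)} {y : σ → K}
    (hy : y ∉ T) :
    ∃ f : MvPolynomial σ K, f.IsHomogeneous 1 ∧ (∀ v ∈ T, eval v f = 0) ∧ eval y f ≠ 0 := by
  have := Fintype.ofFinite σ
  obtain ⟨φ, hφy, hφT⟩ := Submodule.exists_le_ker_of_notMem hy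
  refine ⟨linearForm φ, linearForm_isHomogeneous φ, fun v hv => ?_, ?_⟩
  · rw [eval_linearForm]
    exact hφT hv
  · rwa [eval_linearForm]

lemma vanishingIdeal_submodule_lt [Finite σ] {T T' : Submodule K (σ → K)} (h : T < T') :
    vanishingIdeal K (T' : Set (σ → K)) < vanishingIdeal K (T : Set (σ → K)) := by
  obtain ⟨y, hyT', hyT⟩ := SetLike.exists_of_lt h
  obtain ⟨f, -, hfT, hfy⟩ := exists_linearForm_of_notMem hyT
  refine lt_of_le_not_ge (vanishingIdeal_anti_mono h.le) fun hle => hfy ?_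
  exact hle (fun v hv => hfT v hv) y hyT'

lemma card_le_height_vanishingIdeal_zero [Fintype σ] [Infinite K] :
    (Fintype.card σ : ℕ∞) ≤ (vanishingIdeal K {(0 : σ → K)}).height := by
  let toPrime : (Submodule K (σ → K))ᵒᵈ → PrimeSpectrum (MvPolynomial σ K) := fun T =>
    ⟨vanishingIdeal K (T.ofDual : Set (σ → K)), isPrime_vanishingIdeal_submodule _⟩
  have hmono : StrictMono toPrime := fun T T' h => vanishingIdeal_submodule_lt h
  have hbot : toPrime (OrderDual.toDual ⊥) = ⟨vanishingIdeal K {(0 : σ → K)}, inferInstance⟩ :=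
    PrimeSpectrum.ext (congrArg (vanishingIdeal K) Submodule.bot_coe)
  calc (Fintype.card σ : ℕ∞) = Module.length K (σ → K) := by
        rw [Module.length_eq_finrank, Module.finrank_fintype_fun_eq_card]
    _ = Order.height (OrderDual.toDual (⊥ : Submodule K (σ → K))) := Module.length_eq_coheight ..
    _ ≤ Order.height (toPrime (OrderDual.toDual ⊥)) :=
        Order.height_le_height_apply_of_strictMono _ hmono _
    _ = _ := by rw [hbot, ← PrimeSpectrum.height_eq_orderHeight]

theorem exists_ne_zero_forall_eval_eq_zero [Fintype σ] [IsAlgClosed K]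
    (s : Finset (MvPolynomial σ K)) (hs : s.card < Fintype.card σ) (h0 : ∀ f ∈ s, eval 0 f = 0) :
    ∃ v : σ → K, v ≠ 0 ∧ ∀ f ∈ s, eval v f = 0 := by
  by_contra! hcon
  have hlocus : zeroLocus K (Ideal.span (s : Set (MvPolynomial σ K))) = {0} := by
    ext v
    simp only [zeroLocus_span, aeval_eq_eval, Set.mem_ofPred_eq, Set.mem_singleton_iff]
    refine ⟨fun hv => by_contra fun hne => ?_, fun hv => hv ▸ h0⟩
    obtain ⟨f, hf, hfv⟩ := hcon v hne
    exact hfv (hv f hf)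
  have hrad : vanishingIdeal K {(0 : σ → K)} = (Ideal.span (s : Set _)).radical := by
    rw [← hlocus, vanishingIdeal_zeroLocus_eq_radical]
  have hminimal : vanishingIdeal K {(0 : σ → K)} ∈ (Ideal.span (s : Set _)).minimalPrimes :=
    ⟨⟨inferInstance, hrad ▸ Ideal.le_radical⟩, fun q ⟨hq, hsq⟩ _ => hrad ▸ hq.radical_le_iff.2 hsq⟩
  have hle : (Fintype.card σ : ℕ∞) ≤ s.card := card_le_height_vanishingIdeal_zero.trans
    (Ideal.height_le_card_of_mem_minimalPrimes_span_finset hminimal)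
  exact hs.not_ge (by exact_mod_cast hle)

theorem exists_mem_ne_zero_forall_eval_eq_zero [IsAlgClosed K] (L : Submodule K (σ → K))
    (s : Finset (MvPolynomial σ K)) (hs : s.card < Module.finrank K L)
    (h0 : ∀ f ∈ s, eval 0 f = 0) : ∃ v ∈ L, v ≠ 0 ∧ ∀ f ∈ s, eval v f = 0 := by
  classical
  have : Module.Finite K L := Module.finite_of_finrank_pos (Nat.zero_lt_of_lt hs)
  let param : (Fin (Module.finrank K L) → K) ≃ₗ[K] L := (Module.finBasis K L).equivFun.symm
  let pullback : MvPolynomial σ K →ₐ[K] MvPolynomial (Fin (Module.finrank K L)) K :=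
    aeval fun i => linearForm (LinearMap.proj i ∘ₗ L.subtype ∘ₗ param.toLinearMap)
  have heval (c) (f : MvPolynomial σ K) : eval c (pullback f) = eval (param c : σ → K) f := by
    have hcomp : (aeval c).comp pullback = aeval (param c : σ → K) := by
      ext i
      simp [pullback, aeval_eq_eval, eval_linearForm]
    simpa [aeval_eq_eval] using DFunLike.congr_fun hcomp f
  obtain ⟨c, hc, hzero⟩ := exists_ne_zero_forall_eval_eq_zero (s.image pullback)
    (by simpa using Finset.card_image_le.trans_lt hs)
    (Finset.forall_mem_image.2 fun f hf => by rw [heval, map_zero]; exact h0 f hf)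
  refine ⟨param c, (param c).2, by simpa using hc, fun f hf => ?_⟩
  rw [← heval]
  exact hzero _ (Finset.mem_image_of_mem _ hf)

variable [Fintype σ]

/-- The derivative of a polynomial in the direction of a vector, linear in the vector. -/
def dirDeriv (f : MvPolynomial σ K) : (σ → K) →ₗ[K] MvPolynomial σ K :=
  Fintype.linearCombination K fun i => pderiv i f

lemma dirDeriv_apply (f : MvPolynomial σ K) (y : σ → K) :
    dirDeriv f y = ∑ i, y i • pderiv i f := rfl

lemma dirDeriv_isHomogeneous {f : MvPolynomial σ K} {d : ℕ} (hf : f.IsHomogeneous d)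
    (y : σ → K) : (dirDeriv f y).IsHomogeneous (d - 1) :=
  (homogeneousSubmodule σ K _).sum_mem fun _ _ =>
    (homogeneousSubmodule σ K _).smul_mem _ hf.pderiv

lemma derivative_lineRestrict (x y : σ → K) (f : MvPolynomial σ K) :
    (lineRestrict x y f).derivative = lineRestrict x y (dirDeriv f y) := by
  classical
  induction f using MvPolynomial.induction_on with
  | C a => simp [lineRestrict, dirDeriv_apply, Polynomial.algebraMap_eq]
  | add p q hp hq =>
    have hadd : dirDeriv (p + q) y = dirDeriv p y + dirDeriv q y := by
      simp [dirDeriv_apply, Finset.sum_add_distrib]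
    simp [hp, hq, hadd]
  | mul_X p j hp =>
    have hmul : dirDeriv (p * X j) y = dirDeriv p y * X j + C (y j) * p := by
      simp [dirDeriv_apply, pderiv_X, Pi.single_apply, Finset.sum_add_distrib, Finset.mul_sum,
        smul_eq_C_mul, mul_left_comm, mul_comm, add_comm]
    rw [hmul, map_mul, Polynomial.derivative_mul, hp]
    simp only [lineRestrict, aeval_X, Polynomial.derivative_C,
      Polynomial.derivative_mul, zero_mul, Polynomial.derivative_X, mul_one, zero_add, map_add,
      map_mul, algHom_C, Polynomial.algebraMap_eq]
    ring

lemma eval_dirDeriv_eq_zero [Infinite K] {f : MvPolynomial σ K} {M : Submodule K (σ → K)}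
    (hf : ∀ v ∈ M, eval v f = 0) {x y : σ → K} (hx : x ∈ M) (hy : y ∈ M) :
    eval x (dirDeriv f y) = 0 := by
  have hline : lineRestrict x y f = 0 := Polynomial.funext fun t => by
    rw [eval_lineRestrict, Polynomial.eval_zero]
    exact hf _ (M.add_mem hx (M.smul_mem t hy))
  simpa [derivative_lineRestrict, eval_lineRestrict] using
    congrArg (Polynomial.eval 0 ∘ Polynomial.derivative) hline

/-- The differential at `v` of a polynomial. -/
def differentialAt (f : MvPolynomial σ K) (v : σ → K) : (σ → K) →ₗ[K] K :=
  (aeval v).toLinearMap ∘ₗ dirDeriv f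

lemma differentialAt_apply (f : MvPolynomial σ K) (v y : σ → K) :
    differentialAt f v y = eval v (dirDeriv f y) := rfl

lemma eval_pderiv_eq_zero_of_differentialAt_eq_zero {f : MvPolynomial σ K} {v : σ → K}
    (h : differentialAt f v = 0) (i : σ) : eval v (pderiv i f) = 0 := by
  classical
  simpa [differentialAt_apply, dirDeriv] using DFunLike.congr_fun h (Pi.single i 1)

/-- The intersection of the embedded tangent spaces of the hypersurface `f = 0` at the points
of the linear space `L`. -/
def tangentSpaceAlong (f : MvPolynomial σ K) (L : Submodule K (σ → K)) : Submodule K (σ → K) :=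
  ⨅ v ∈ L, LinearMap.ker (differentialAt f v)

lemma mem_tangentSpaceAlong {f : MvPolynomial σ K} {L : Submodule K (σ → K)} {y : σ → K} :
    y ∈ tangentSpaceAlong f L ↔ ∀ v ∈ L, differentialAt f v y = 0 := by
  simp [tangentSpaceAlong]

lemma le_tangentSpaceAlong [Infinite K] {f : MvPolynomial σ K} {L M : Submodule K (σ → K)}
    (hLM : L ≤ M) (hf : ∀ v ∈ M, eval v f = 0) : M ≤ tangentSpaceAlong f L :=
  fun _ hy => mem_tangentSpaceAlong.2 fun _ hv => eval_dirDeriv_eq_zero hf (hLM hv) hy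

theorem finrank_tangentSpaceAlong_add_finrank_le [IsAlgClosed K] {f : MvPolynomial σ K} {d : ℕ}
    (hd : 2 ≤ d) (hf : f.IsHomogeneous d)
    (hgrad : ∀ v : σ → K, (∀ i, eval v (pderiv i f) = 0) → v = 0) (L : Submodule K (σ → K)) :
    Module.finrank K (tangentSpaceAlong f L) + Module.finrank K L ≤ Fintype.card σ := by
  classical
  obtain ⟨C, hC⟩ := (tangentSpaceAlong f L).exists_isCompl
  have hdim := Submodule.finrank_add_eq_of_isCompl hC
  rw [Module.finrank_fintype_fun_eq_card] at hdim
  suffices Module.finrank K L ≤ Module.finrank K C by omega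
  by_contra! hlt
  let b := Module.finBasis K C
  obtain ⟨v, hvL, hv0, hvb⟩ := exists_mem_ne_zero_forall_eval_eq_zero L
    (Finset.univ.image fun i => dirDeriv f (b i))
    (Finset.card_image_le.trans_lt (by simpa using hlt))
    (Finset.forall_mem_image.2 fun i _ =>
      eval_zero_of_isHomogeneous (dirDeriv_isHomogeneous hf _) (by omega))
  have hT : tangentSpaceAlong f L ≤ LinearMap.ker (differentialAt f v) := fun y hy =>
    mem_tangentSpaceAlong.1 hy v hvL
  have hC' : C ≤ LinearMap.ker (differentialAt f v) :=
    LinearMap.le_ker_iff_comp_subtype_eq_zero.2 <| b.ext fun i =>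
      hvb _ (Finset.mem_image_of_mem _ (Finset.mem_univ i))
  have hker : LinearMap.ker (differentialAt f v) = ⊤ :=
    top_le_iff.1 (hC.sup_eq_top.ge.trans (sup_le hT hC'))
  exact hv0 (hgrad v (eval_pderiv_eq_zero_of_differentialAt_eq_zero (LinearMap.ker_eq_top.1 hker)))

theorem two_mul_finrank_le_of_forall_eval_eq_zero [IsAlgClosed K] {f : MvPolynomial σ K} {d : ℕ}
    (hd : 2 ≤ d) (hf : f.IsHomogeneous d)
    (hgrad : ∀ v : σ → K, (∀ i, eval v (pderiv i f) = 0) → v = 0) {M : Submodule K (σ → K)}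
    (hM : ∀ v ∈ M, eval v f = 0) : 2 * Module.finrank K M ≤ Fintype.card σ := by
  have hle := Submodule.finrank_mono (le_tangentSpaceAlong le_rfl hM)
  have hdim := finrank_tangentSpaceAlong_add_finrank_le hd hf hgrad M
  omega

end Polynomials

lemma krullDim_add_one_le_of_forall_lt {α β : Type*} [Preorder α] [Preorder β] {f : α → β}
    (hf : StrictMono f) {b : β} (hb : ∀ a, f a < b) :
    Order.krullDim α + 1 ≤ Order.krullDim β := by
  cases isEmpty_or_nonempty α
  · simp [Order.krullDim_eq_bot]
  · rw [← Order.krullDim_WithTop]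
    let extended : WithTop α → β := WithTop.recTopCoe b f
    have hextended : StrictMono extended := WithTop.strictMono_iff.2 ⟨hf, hb⟩
    exact Order.krullDim_le_of_strictMono extended hextended

lemma add_natCast_le_of_add_natCast_le {x : WithBot ℕ∞} {a b m n : ℕ} (hx : x + a ≤ m)
    (h : m + b ≤ n + a) : x + b ≤ n := by
  induction x with
  | bot => simp
  | coe x =>
    induction x with
    | top => exact absurd hx (not_le.2 (WithBot.coe_lt_coe.2 (by simp)))
    | coe k =>
      have hk : k + a ≤ m := by exact_mod_cast hx
      exact_mod_cast (by omega : k + b ≤ n)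

section Projective

open MvPolynomial

variable {n : ℕ}

lemma mk_mem_planeSet {T : Submodule KK (Fin (n + 1) → KK)} {v : Fin (n + 1) → KK} (hv : v ≠ 0) :
    Projectivization.mk KK v hv ∈ planeSet T ↔ v ∈ T := by
  obtain ⟨a, ha⟩ := Projectivization.exists_smul_eq_mk_rep KK v hv
  change (Projectivization.mk KK v hv).rep ∈ T ↔ v ∈ T
  rw [← ha]
  exact T.smul_mem_iff_of_isUnit a.isUnit

lemma mk_mem_hyp {f : MvPolynomial (Fin (n + 1)) KK} {d : ℕ} (hf : f.IsHomogeneous d)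
    {v : Fin (n + 1) → KK} (hv : v ≠ 0) : Projectivization.mk KK v hv ∈ hyp f ↔ eval v f = 0 := by
  obtain ⟨a, ha⟩ := Projectivization.exists_smul_eq_mk_rep KK v hv
  change eval (Projectivization.mk KK v hv).rep f = 0 ↔ _
  rw [← ha, Units.smul_def, eval_smul_of_isHomogeneous hf]
  simp

lemma forall_eval_eq_zero_of_planeSet_subset_hyp {f : MvPolynomial (Fin (n + 1)) KK} {d : ℕ}
    (hd : d ≠ 0) (hf : f.IsHomogeneous d) {T : Submodule KK (Fin (n + 1) → KK)}
    (hT : planeSet T ⊆ hyp f) : ∀ v ∈ T, eval v f = 0 := by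
  intro v hv
  rcases eq_or_ne v 0 with rfl | hv0
  · exact eval_zero_of_isHomogeneous hf hd
  · exact (mk_mem_hyp hf hv0).1 (hT ((mk_mem_planeSet hv0).2 hv))

lemma projClosed_hyp {f : MvPolynomial (Fin (n + 1)) KK} {d : ℕ} (hf : f.IsHomogeneous d) :
    ProjClosed (hyp f) :=
  ⟨{f}, by simpa using ⟨d, hf⟩, by ext; simp [hyp, projZeros]⟩

lemma projClosed_planeSet (T : Submodule KK (Fin (n + 1) → KK)) : ProjClosed (planeSet T) := by
  refine ⟨{f | f.IsHomogeneous 1 ∧ ∀ v ∈ T, eval v f = 0}, fun f hf => ⟨1, hf.1⟩, ?_⟩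
  refine Set.Subset.antisymm (fun x hx f hf => hf.2 _ hx) fun x hx => by_contra fun hxT => ?_
  obtain ⟨f, hf, hfT, hfx⟩ := exists_linearForm_of_notMem hxT
  exact hfx (hx f ⟨hf, hfT⟩)

lemma exists_form_of_not_subset {V C : Set (Pn n)} (hC : ProjClosed C) (hVC : ¬ V ⊆ C) :
    ∃ (f : MvPolynomial (Fin (n + 1)) KK) (d : ℕ), f.IsHomogeneous d ∧ C ⊆ hyp f ∧ ¬ V ⊆ hyp f := by
  obtain ⟨S, hS, rfl⟩ := hC
  obtain ⟨x, hxV, hxC⟩ := Set.not_subset.1 hVC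
  obtain ⟨f, hfS, hfx⟩ : ∃ f ∈ S, eval x.rep f ≠ 0 := by
    simpa only [projZeros, Set.mem_ofPred_eq, not_forall, exists_prop] using hxC
  obtain ⟨d, hd⟩ := hS f hfS
  exact ⟨f, d, hd, fun y hy => hy f hfS, fun hV => hfx (hV hxV)⟩

lemma hyp_mul (f g : MvPolynomial (Fin (n + 1)) KK) : hyp (f * g) = hyp f ∪ hyp g := by
  ext x
  simp [hyp]

lemma projVariety_planeSet {T : Submodule KK (Fin (n + 1) → KK)} (hT : T ≠ ⊥) :
    ProjVariety (planeSet T) := by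
  obtain ⟨w, hwT, hw0⟩ := T.ne_bot_iff.1 hT
  have hw : Projectivization.mk KK w hw0 ∈ planeSet T := (mk_mem_planeSet hw0).2 hwT
  refine ⟨projClosed_planeSet T, ⟨_, hw⟩, fun C₁ C₂ hC₁ hC₂ hcover => ?_⟩
  by_contra! ⟨hTC₁, hTC₂⟩
  obtain ⟨f, i, hf, hCf, hTf⟩ := exists_form_of_not_subset hC₁ hTC₁
  obtain ⟨g, j, hg, hCg, hTg⟩ := exists_form_of_not_subset hC₂ hTC₂
  have hsub : planeSet T ⊆ hyp (f * g) :=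
    hyp_mul f g ▸ hcover.trans (Set.union_subset_union hCf hCg)
  have hmem : f * g ∈ vanishingIdeal KK (T : Set (Fin (n + 1) → KK)) := by
    intro v hv
    rcases eq_or_ne v 0 with rfl | hv0
    -- `f * g` may have degree zero, so its vanishing at the origin is read off at `w`.
    · have hfgw := (mk_mem_hyp (hf.mul hg) hw0).1 (hsub hw)
      simpa [aeval_eq_eval, hfgw] using eval_smul_of_isHomogeneous (hf.mul hg) 0 w
    · exact (mk_mem_hyp (hf.mul hg) hv0).1 (hsub ((mk_mem_planeSet hv0).2 hv))
  rcases (isPrime_vanishingIdeal_submodule T).mem_or_mem hmem with h | h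
  · exact hTf fun x hx => h _ hx
  · exact hTg fun x hx => h _ hx

lemma planeSet_ssubset {T T' : Submodule KK (Fin (n + 1) → KK)} (h : T < T') :
    planeSet T ⊂ planeSet T' := by
  obtain ⟨y, hyT', hyT⟩ := SetLike.exists_of_lt h
  have hy0 : y ≠ 0 := fun hy => hyT (hy ▸ T.zero_mem)
  exact ⟨fun x hx => h.le hx, fun hle =>
    hyT ((mk_mem_planeSet hy0).1 (hle ((mk_mem_planeSet hy0).2 hyT')))⟩

/-- The homogeneous ideal of a subset of projective space. -/
def projVanishingIdeal (W : Set (Pn n)) : Ideal (MvPolynomial (Fin (n + 1)) KK) :=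
  Ideal.span {f | (∃ d, f.IsHomogeneous d) ∧ W ⊆ hyp f}

lemma subset_hyp_of_mem_projVanishingIdeal {W : Set (Pn n)} {f : MvPolynomial (Fin (n + 1)) KK}
    (hf : f ∈ projVanishingIdeal W) : W ⊆ hyp f := fun x hx =>
  have hle : projVanishingIdeal W ≤ RingHom.ker (eval x.rep) := Ideal.span_le.2 fun _ hg => hg.2 hx
  hle hf

lemma mem_projVanishingIdeal_iff {W : Set (Pn n)} {f : MvPolynomial (Fin (n + 1)) KK} {d : ℕ}
    (hf : f.IsHomogeneous d) : f ∈ projVanishingIdeal W ↔ W ⊆ hyp f :=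
  ⟨subset_hyp_of_mem_projVanishingIdeal, fun h => Ideal.subset_span ⟨⟨d, hf⟩, h⟩⟩

attribute [local instance] MvPolynomial.gradedAlgebra in
lemma isPrime_projVanishingIdeal {W : Set (Pn n)} (hW : ProjIrred W) :
    (projVanishingIdeal W).IsPrime := by
  have hhom : (projVanishingIdeal W).IsHomogeneous (homogeneousSubmodule (Fin (n + 1)) KK) :=
    Ideal.homogeneous_span _ _ fun f hf => hf.1
  refine hhom.isPrime_of_homogeneous_mem_or_mem (fun htop => ?_) ?_
  · obtain ⟨x, hx⟩ := hW.1
    have hone : W ⊆ hyp 1 := subset_hyp_of_mem_projVanishingIdeal (htop ▸ Submodule.mem_top)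
    simpa [hyp] using hone hx
  · rintro f g ⟨i, hf⟩ ⟨j, hg⟩ hfg
    rw [mem_projVanishingIdeal_iff hf, mem_projVanishingIdeal_iff hg]
    refine hW.2 _ _ (projClosed_hyp hf) (projClosed_hyp hg) ?_
    exact hyp_mul f g ▸ subset_hyp_of_mem_projVanishingIdeal hfg

lemma projVanishingIdeal_lt {W W' : Set (Pn n)} (hW : ProjClosed W) (h : W ⊂ W') :
    projVanishingIdeal W' < projVanishingIdeal W := by
  obtain ⟨f, d, hf, hWf, hW'f⟩ := exists_form_of_not_subset hW h.2
  refine lt_of_le_not_ge (Ideal.span_mono fun g hg => ⟨hg.1, h.1.trans hg.2⟩) fun hle => hW'f ?_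
  exact subset_hyp_of_mem_projVanishingIdeal (hle ((mem_projVanishingIdeal_iff hf).2 hWf))

lemma projVanishingIdeal_lt_ker_constantCoeff {W : Set (Pn n)} (hW : W.Nonempty) :
    projVanishingIdeal W < RingHom.ker (constantCoeff (σ := Fin (n + 1)) (R := KK)) := by
  obtain ⟨x, hx⟩ := hW
  refine lt_of_le_not_ge (Ideal.span_le.2 ?_) fun hle => x.rep_nonzero (funext fun i => ?_)
  · rintro f ⟨⟨d, hf⟩, hWf⟩
    have hfx : eval x.rep f = 0 := hWf hx
    simpa [hfx] using eval_smul_of_isHomogeneous hf 0 x.rep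
  · have hX : W ⊆ hyp (X i) :=
      subset_hyp_of_mem_projVanishingIdeal (hle (constantCoeff_X KK i))
    simpa [hyp] using hX hx

lemma projDim_mono {V V' : Set (Pn n)} (h : V ⊆ V') : projDim V ≤ projDim V' :=
  Order.krullDim_le_of_strictMono (fun W => ⟨W.1, W.2.1, W.2.2.trans h⟩) fun _ _ hlt => hlt

lemma projDim_add_one_le_of_ssubset {V X : Set (Pn n)} (hX : ProjVariety X) (h : V ⊂ X) :
    projDim V + 1 ≤ projDim X :=
  krullDim_add_one_le_of_forall_lt (f := fun W => ⟨W.1, W.2.1, W.2.2.trans h.1⟩)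
    (b := ⟨X, hX, subset_rfl⟩) (fun _ _ hlt => hlt) fun W => W.2.2.trans_ssubset h

lemma projDim_add_one_le (V : Set (Pn n)) : projDim V + 1 ≤ (n + 1 : ℕ) := by
  have hmono : StrictMono fun W : {W : Set (Pn n) // ProjVariety W ∧ W ⊆ V}ᵒᵈ =>
      (⟨projVanishingIdeal W.ofDual.1, isPrime_projVanishingIdeal W.ofDual.2.1.2⟩ :
        PrimeSpectrum (MvPolynomial (Fin (n + 1)) KK)) :=
    fun W W' h => projVanishingIdeal_lt W'.ofDual.2.1.1 h
  have hdim := krullDim_add_one_le_of_forall_lt hmono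
    (b := ⟨RingHom.ker constantCoeff, RingHom.ker_isPrime _⟩)
    fun W => projVanishingIdeal_lt_ker_constantCoeff W.ofDual.2.1.2.1
  rw [Order.krullDim_orderDual] at hdim
  have hring : ringKrullDim (MvPolynomial (Fin (n + 1)) KK) = (n + 1 : ℕ) := by
    simp [MvPolynomial.ringKrullDim_of_isNoetherianRing]
  exact hdim.trans hring.le

lemma projDim_planeSet_add_one_le (T : Submodule KK (Fin (n + 1) → KK)) :
    projDim (planeSet T) + 1 ≤ Module.finrank KK T := by
  induction T using WellFoundedGT.induction with
  | ind T ih =>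
    rcases eq_or_ne T ⊤ with rfl | hT
    · simpa using projDim_add_one_le _
    · obtain ⟨y, -, hy⟩ := SetLike.exists_of_lt hT.lt_top
      have hy0 : y ≠ 0 := fun h => hy (h ▸ T.zero_mem)
      let T' := T ⊔ Submodule.span KK {y}
      have hlt : T < T' :=
        left_lt_sup.2 fun hle => hy (hle (Submodule.mem_span_singleton_self y))
      have hfinrank : Module.finrank KK T' ≤ Module.finrank KK T + 1 :=
        (T.finrank_add_le_finrank_add_finrank _).trans
          (Nat.add_le_add_left (finrank_span_singleton hy0).le _)
      have hdim : projDim (planeSet T) + 2 ≤ Module.finrank KK T' :=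
        calc projDim (planeSet T) + 2 = projDim (planeSet T) + 1 + 1 := by
              rw [add_assoc, one_add_one_eq_two]
          _ ≤ projDim (planeSet T') + 1 := by
              gcongr
              exact projDim_add_one_le_of_ssubset (projVariety_planeSet hlt.ne_bot)
                (planeSet_ssubset hlt)
          _ ≤ Module.finrank KK T' := ih T' hlt
      exact add_natCast_le_of_add_natCast_le (a := 2) (b := 1) hdim (by omega)

lemma projDim_add_two_le_of_ssubset_planeSet {V : Set (Pn n)} {T : Submodule KK (Fin (n + 1) → KK)}
    (h : V ⊂ planeSet T) : projDim V + 2 ≤ Module.finrank KK T := by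
  have hT : T ≠ ⊥ := by
    rintro rfl
    obtain ⟨x, hx, -⟩ := Set.exists_of_ssubset h
    exact x.rep_nonzero hx
  calc projDim V + 2 = projDim V + 1 + 1 := by rw [add_assoc, one_add_one_eq_two]
    _ ≤ projDim (planeSet T) + 1 := by
        gcongr
        exact projDim_add_one_le_of_ssubset (projVariety_planeSet hT) h
    _ ≤ Module.finrank KK T := projDim_planeSet_add_one_le T

end Projective

theorem statement10_general {d n : ℕ} (hd : 2 ≤ d) {F : MvPolynomial (Fin (n + 1)) KK}
    (hF : F.IsHomogeneous d) (hns : NonsingularK F) {L : Submodule KK (Fin (n + 1) → KK)}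
    (hL : 2 * Module.finrank KK L < n + 1) {Z : Set (Submodule KK (Fin (n + 1) → KK))}
    (hZ : ∀ P ∈ Z, planeSet P ⊆ hyp F) :
    projDim {x : Pn n | ∃ P ∈ Z, L ≤ P ∧ x.rep ∈ P} + (Module.finrank KK L + 1 : ℕ) ≤ n := by
  set T := tangentSpaceAlong F L
  have hrank : Module.finrank KK T + Module.finrank KK L ≤ n + 1 := by
    simpa using finrank_tangentSpaceAlong_add_finrank_le hd hF hns L
  have hsub : {x : Pn n | ∃ P ∈ Z, L ≤ P ∧ x.rep ∈ P} ⊆ planeSet T ∩ hyp F := by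
    rintro x ⟨P, hP, hLP, hxP⟩
    have hFP := forall_eval_eq_zero_of_planeSet_subset_hyp (by omega) hF (hZ P hP)
    exact ⟨le_tangentSpaceAlong hLP hFP hxP, hZ P hP hxP⟩
  by_cases hTF : planeSet T ⊆ hyp F
  · have hhalf : 2 * Module.finrank KK T ≤ n + 1 := by
      simpa using two_mul_finrank_le_of_forall_eval_eq_zero hd hF hns
        (forall_eval_eq_zero_of_planeSet_subset_hyp (by omega) hF hTF)
    have hdim := (add_le_add_left (projDim_mono (hsub.trans Set.inter_subset_left)) 1).trans
      (projDim_planeSet_add_one_le T)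
    exact add_natCast_le_of_add_natCast_le (a := 1) hdim (by omega)
  · have hdim := projDim_add_two_le_of_ssubset_planeSet
      (hsub.trans_ssubset (Set.inter_ssubset_left_iff.2 hTF))
    exact add_natCast_le_of_add_natCast_le (a := 2) hdim (by omega)

/-- **Lemma 8.** Let d ≥ 3, n ≥ 5 and let X ⊂ Pⁿ be a non-singular hypersurface of
degree d.  Then for every line L ∈ F₁(X) and every subvariety Z ⊆ F₂(X) one has
dim C_L(Z) ≤ n - 3, where C_L(Z) is the union of the planes of Z containing L. -/
theorem statement10 (d n : ℕ) (hd : 3 ≤ d) (hn : 5 ≤ n)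
    (F : MvPolynomial (Fin (n + 1)) KK) (hF : F.IsHomogeneous d)
    (hns : NonsingularK F)
    (L : Submodule KK (Fin (n + 1) → KK)) (hL : L ∈ Fano 1 n (hyp F))
    (Z : Set (Submodule KK (Fin (n + 1) → KK)))
    (hZc : GrClosed 2 n Z) (hZ : Z ⊆ Fano 2 n (hyp F)) :
    projDim {x : Pn n | ∃ P ∈ Z, L ≤ P ∧ x.rep ∈ P} + ((3 : ENat) : WithBot ENat) ≤
      ((n : ENat) : WithBot ENat) := by
  have h := statement10_general (by omega) hF hns (L := L) (by rw [hL.1]; omega)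
    fun P hP => (hZ hP).2
  simpa [hL.1] using h

end
end

section
/- Let X ⊂ P^n be a non-singular hypersurface of degree d ≥ 2 defined by a form F, and let L ⊂ X be a line contained in X. Then the tangent hyperplane to X is not constant along L: there exist distinct points x, y ∈ L with T_x(X) ≠ T_y(X). Equivalently, if x = [𝐱] and y = [𝐲] span L, then the gradient ∇F(λ𝐱 + μ𝐲) is not of the form h(λ,μ)·𝐯 for a fixed vector 𝐯 and a binary form h of degree d−1. -/
noncomputable section

/-!
A form `G` of degree `e > 0` has a non-trivial zero on every plane through the origin: if `G(y) ≠ 0`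
then `G(x + t • y)` is a polynomial in `t` whose degree-`e` coefficient is `G(y)`, so it is not
constant and has a root. Now pick a non-zero `w` on `L` and a partial derivative `∂ⱼF` with
`∂ⱼF(w) ≠ 0`. Since `d - 1 > 0`, that derivative vanishes at some non-zero `v` on `L`; as
`∇F(v) ≠ 0`, the gradients at `v` and `w` cannot be proportional.
-/

section FormsOnLines

open MvPolynomial

variable {σ R K : Type*}

lemma coeff_prod_sum_of_natDegree_le [CommSemiring R] (s : Finset σ) (f : σ → Polynomial R)
    (m : σ → ℕ) (hf : ∀ i ∈ s, (f i).natDegree ≤ m i) :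
    (∏ i ∈ s, f i).coeff (∑ i ∈ s, m i) = ∏ i ∈ s, (f i).coeff (m i) := by
  induction s using Finset.cons_induction with
  | empty => simp
  | cons a s ha ih =>
    obtain ⟨hfa, hfs⟩ := (Finset.forall_mem_cons ha _).mp hf
    have hdeg : (∏ i ∈ s, f i).natDegree ≤ ∑ i ∈ s, m i :=
      (Polynomial.natDegree_prod_le s f).trans (Finset.sum_le_sum hfs)
    rw [Finset.prod_cons, Finset.sum_cons, Finset.prod_cons,
      Polynomial.coeff_mul_add_eq_of_natDegree_le hfa hdeg, ih hfs]

/-- The restriction of `G` to the line through `x` with direction `y`, as a polynomial in the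
parameter `t` of `x + t • y`. -/
def lineRestriction [CommSemiring R] (x y : σ → R) (G : MvPolynomial σ R) : Polynomial R :=
  aeval (fun i => Polynomial.C (y i) * Polynomial.X + Polynomial.C (x i)) G

lemma eval_lineRestriction [CommSemiring R] (x y : σ → R) (G : MvPolynomial σ R) (t : R) :
    (lineRestriction x y G).eval t = eval (x + t • y) G := by
  induction G using MvPolynomial.induction_on with
  | C a => simp [lineRestriction]
  | add p q hp hq => simpa [lineRestriction] using congr($hp + $hq)
  | mul_X p i hp =>
    simp only [lineRestriction, map_mul, Polynomial.eval_mul] at hp ⊢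
    simp [hp, mul_comm t, add_comm (x i)]

lemma coeff_lineRestriction_of_isHomogeneous [CommSemiring R] {G : MvPolynomial σ R} {e : ℕ}
    (hG : G.IsHomogeneous e) (x y : σ → R) :
    (lineRestriction x y G).coeff e = eval y G := by
  simp only [lineRestriction, aeval_def, eval₂_eq, eval_eq, Polynomial.finsetSum_coeff,
    Polynomial.algebraMap_eq, Polynomial.coeff_C_mul]
  refine Finset.sum_congr rfl fun u hu => ?_
  have hlin (i : σ) : (Polynomial.C (y i) * Polynomial.X + Polynomial.C (x i)).natDegree ≤ 1 :=
    Polynomial.natDegree_linear_le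
  have hpow (i : σ) :
      ((Polynomial.C (y i) * Polynomial.X + Polynomial.C (x i)) ^ u i).coeff (u i) = y i ^ u i := by
    simpa using Polynomial.coeff_pow_of_natDegree_le (m := u i) (hlin i)
  rw [hG.degree_eq_sum_deg_support hu, coeff_prod_sum_of_natDegree_le _ _ _ fun i _ => by
    simpa using Polynomial.natDegree_pow_le_of_le (u i) (hlin i)]
  simp only [hpow]

variable [Field K] [IsAlgClosed K]

lemma exists_eval_add_smul_eq_zero {G : MvPolynomial σ K} {e : ℕ} (hG : G.IsHomogeneous e)
    (he : e ≠ 0) (x : σ → K) {y : σ → K} (hy : eval y G ≠ 0) :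
    ∃ t : K, eval (x + t • y) G = 0 := by
  have hcoeff : (lineRestriction x y G).coeff e ≠ 0 := by
    rwa [coeff_lineRestriction_of_isHomogeneous hG]
  have hdeg : (lineRestriction x y G).degree ≠ 0 := fun h =>
    he (Nat.le_zero.mp ((Polynomial.le_natDegree_of_ne_zero hcoeff).trans_eq
      (Polynomial.natDegree_eq_of_degree_eq_some h)))
  obtain ⟨t, ht⟩ := IsAlgClosed.exists_root _ hdeg
  exact ⟨t, (eval_lineRestriction x y G t).symm.trans ht⟩

lemma exists_mem_ne_zero_eval_eq_zero {G : MvPolynomial σ K} {e : ℕ} (hG : G.IsHomogeneous e)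
    (he : e ≠ 0) {L : Submodule K (σ → K)} (hL : 1 < Module.rank K L) :
    ∃ z ∈ L, z ≠ 0 ∧ eval z G = 0 := by
  obtain ⟨y, hyL, hy⟩ := exists_mem_ne_zero_of_rank_pos (zero_lt_one.trans hL)
  obtain ⟨⟨x, hxL⟩, hyx⟩ :=
    exists_linearIndependent_pair_of_one_lt_rank hL (x := ⟨y, hyL⟩) (by simpa using hy)
  by_cases hGy : eval y G = 0
  · exact ⟨y, hyL, hy, hGy⟩
  · obtain ⟨t, ht⟩ := exists_eval_add_smul_eq_zero hG he x hGy
    refine ⟨x + t • y, L.add_mem hxL (L.smul_mem t hyL), fun h => ?_, ht⟩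
    have hdep : t • (⟨y, hyL⟩ : L) + (1 : K) • ⟨x, hxL⟩ = 0 :=
      Subtype.ext (by simpa [add_comm] using h)
    exact one_ne_zero (LinearIndependent.pair_iff.mp hyx t 1 hdep).2

lemma exists_mem_linearIndependent_eval {ι : Type*} {G : ι → MvPolynomial σ K} {e : ι → ℕ}
    (hG : ∀ i, (G i).IsHomogeneous (e i)) (he : ∀ i, e i ≠ 0) {L : Submodule K (σ → K)}
    (hL : 1 < Module.rank K L) (hzero : ∀ z ∈ L, (∀ i, eval z (G i) = 0) → z = 0) :
    ∃ v ∈ L, ∃ w ∈ L, LinearIndependent K ![fun i => eval v (G i), fun i => eval w (G i)] := by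
  obtain ⟨w, hwL, hw⟩ := exists_mem_ne_zero_of_rank_pos (zero_lt_one.trans hL)
  obtain ⟨j, hwj⟩ : ∃ j, eval w (G j) ≠ 0 := by
    by_contra! h
    exact hw (hzero w hwL h)
  obtain ⟨v, hvL, hv, hvj⟩ := exists_mem_ne_zero_eval_eq_zero (hG j) (he j) hL
  have hGv : (fun i => eval v (G i)) ≠ 0 := fun h => hv (hzero v hvL (congrFun h))
  refine ⟨v, hvL, w, hwL, (LinearIndependent.pair_iff' hGv).mpr fun a h => hwj ?_⟩
  simpa [hvj] using (congrFun h j).symm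

theorem statement11_general {d : ℕ} (hd : 2 ≤ d) {F : MvPolynomial σ K} (hF : F.IsHomogeneous d)
    {L : Submodule K (σ → K)} (hL : 1 < Module.rank K L)
    (hns : ∀ z ∈ L, (∀ i, eval z (pderiv i F) = 0) → z = 0) :
    ∃ v ∈ L, ∃ w ∈ L, LinearIndependent K
      ![fun i => eval v (pderiv i F), fun i => eval w (pderiv i F)] :=
  exists_mem_linearIndependent_eval (fun _ => hF.pderiv) (fun _ => by omega) hL hns

end FormsOnLines

/-- **Claim in the proof of Lemma 8.** Let X ⊂ Pⁿ be a non-singular hypersurface of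
degree d ≥ 2 defined by the form F and let L ⊂ X be a line contained in X.  Then
the tangent hyperplane to X is not constant along L: there are two points of L at
which the gradients ∇F are not proportional (in particular the gradient along L is
not of the form h(λ,μ)·𝐯 for a fixed vector 𝐯). -/
theorem statement11 (d n : ℕ) (hd : 2 ≤ d)
    (F : MvPolynomial (Fin (n + 1)) KK) (hF : F.IsHomogeneous d)
    (hns : NonsingularK F)
    (L : Submodule KK (Fin (n + 1) → KK)) (hrk : Module.finrank KK L = 2)
    (hLX : planeSet L ⊆ hyp F) :
    ∃ v ∈ L, ∃ w ∈ L, LinearIndependent KK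
      ![fun i => MvPolynomial.eval v (MvPolynomial.pderiv i F),
        fun i => MvPolynomial.eval w (MvPolynomial.pderiv i F)] := by
  exact statement11_general hd hF (Module.one_lt_rank_of_one_lt_finrank (by omega)) fun z _ => hns z

end
end
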